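/- For every integer k ≥ 385, the maximum size of a k-nice subset of ℤ² is: k+4 if k ≡ 2 (mod 6); k+3 if k mod 6 ∈ {1,3,5}; and k+2 if k mod 6 ∈ {0,4}. That is, every k-nice set has at most this many elements, and there exists a k-nice set with exactly this many elements. -/

import Mathlib

/-- A set `Q ⊆ ℤ²` is `k`-nice if every element is a nonzero coprime pair,
`Q` does not contain both a pair and its negation, and all cross determinants
are bounded by `k` in absolute value. -/
def IsKNice (k : ℕ) (Q : Set (ℤ × ℤ)) : Prop :=
  (∀ p ∈ Q, p ≠ (0, 0) ∧ Int.gcd p.1 p.2 = 1) ∧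
  (∀ p ∈ Q, -p ∉ Q) ∧
  (∀ p ∈ Q, ∀ q ∈ Q, |p.1 * q.2 - q.1 * p.2| ≤ (k : ℤ))

/-- `Q` is y-non-negative: all second coordinates are non-negative. -/
def YNonneg (Q : Set (ℤ × ℤ)) : Prop := ∀ p ∈ Q, 0 ≤ p.2

/-- The height of `Q` is at most `h`. -/
def HeightLe (Q : Set (ℤ × ℤ)) (h : ℕ) : Prop := ∀ p ∈ Q, |p.2| ≤ (h : ℤ)

/-- The height of `Q` is exactly `h`: the maximum of `|n|` over `(m, n) ∈ Q` is `h`. -/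
def HeightEq (Q : Set (ℤ × ℤ)) (h : ℕ) : Prop :=
  HeightLe Q h ∧ ∃ p ∈ Q, |p.2| = (h : ℤ)

/-- The claimed maximum size of a `k`-nice set for large `k`. -/
def targetSize (k : ℕ) : ℕ :=
  if k % 6 = 2 then k + 4
  else if k % 6 = 1 ∨ k % 6 = 3 ∨ k % 6 = 5 then k + 3
  else k + 2


/-! ### Normalisation of a nice set -/

/-- Two coprime vectors with vanishing determinant agree up to sign. -/
lemma coprime_parallel {p q : ℤ × ℤ} (hp : Int.gcd p.1 p.2 = 1) (hq : Int.gcd q.1 q.2 = 1)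
    (h : p.1 * q.2 - q.1 * p.2 = 0) : q = p ∨ q = -p := by
  obtain ⟨a, b⟩ := p
  obtain ⟨c, d⟩ := q
  simp only at hp hq h
  have e : a * d = c * b := by linarith
  have hp' : IsCoprime a b := Int.isCoprime_iff_gcd_eq_one.mpr hp
  have hq' : IsCoprime c d := Int.isCoprime_iff_gcd_eq_one.mpr hq
  have h1 : a ∣ c := hp'.dvd_of_dvd_mul_right ⟨d, by linarith⟩
  have h2 : c ∣ a := hq'.dvd_of_dvd_mul_right ⟨b, by linarith⟩
  have h3 : b ∣ d := hp'.symm.dvd_of_dvd_mul_left ⟨c, by linarith⟩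
  have h4 : d ∣ b := hq'.symm.dvd_of_dvd_mul_left ⟨a, by linarith⟩
  have hac : c = a ∨ c = -a := by
    have := Int.natAbs_eq_natAbs_iff.mp (Nat.dvd_antisymm (Int.natAbs_dvd_natAbs.mpr h2) (Int.natAbs_dvd_natAbs.mpr h1))
    exact this
  have hbd : d = b ∨ d = -b := by
    have := Int.natAbs_eq_natAbs_iff.mp (Nat.dvd_antisymm (Int.natAbs_dvd_natAbs.mpr h4) (Int.natAbs_dvd_natAbs.mpr h3))
    exact this
  rcases hac with rfl | rfl <;> rcases hbd with rfl | rfl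
  · left; rfl
  · have : c * b = 0 := by linarith
    rcases mul_eq_zero.mp this with rfl | rfl
    · right; simp
    · left; simp
  · have : a * d = 0 := by linarith
    rcases mul_eq_zero.mp this with rfl | rfl
    · left; simp
    · right; simp
  · right; rfl

/-- A nice set is finite. -/
lemma IsKNice.finite {k : ℕ} {Q : Set (ℤ × ℤ)} (hQ : IsKNice k Q) : Q.Finite := by
  obtain ⟨h1, -, h3⟩ := hQ
  rcases Q.eq_empty_or_nonempty with rfl | ⟨p, hp⟩
  · exact Set.finite_empty
  by_cases hc : ∀ q ∈ Q, p.1 * q.2 - q.1 * p.2 = 0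
  · apply Set.Finite.subset (Set.toFinite {p, -p})
    intro q hq
    rcases coprime_parallel (h1 p hp).2 (h1 q hq).2 (hc q hq) with h | h <;> simp [h]
  · push Not at hc
    obtain ⟨q, hq, hne⟩ := hc
    let f : ℤ × ℤ → ℤ × ℤ := fun z => (p.1 * z.2 - z.1 * p.2, q.1 * z.2 - z.1 * q.2)
    have hf : Function.Injective f := by
      rintro ⟨x, y⟩ ⟨x', y'⟩ h
      simp only [f, Prod.mk.injEq] at h
      obtain ⟨e1, e2⟩ := h
      have hx : (p.1 * q.2 - q.1 * p.2) * (x - x') = 0 := by linear_combination q.1 * e1 - p.1 * e2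
      have hy : (p.1 * q.2 - q.1 * p.2) * (y - y') = 0 := by linear_combination q.2 * e1 - p.2 * e2
      have hx' := (mul_eq_zero.mp hx).resolve_left hne
      have hy' := (mul_eq_zero.mp hy).resolve_left hne
      rw [Prod.mk.injEq]; constructor <;> linarith
    apply Set.Finite.of_finite_image _ hf.injOn
    apply Set.Finite.subset ((Set.finite_Icc (-(k:ℤ)) k).prod (Set.finite_Icc (-(k:ℤ)) k))
    rintro _ ⟨z, hz, rfl⟩
    exact ⟨abs_le.mp (h3 p hp z hz), abs_le.mp (h3 q hq z hz)⟩

/-- Images of nice sets under unimodular maps are nice. -/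
lemma IsKNice.image {k : ℕ} {Q : Set (ℤ × ℤ)} (hQ : IsKNice k Q) (a b c d : ℤ)
    (hdet : a * d - b * c = 1 ∨ a * d - b * c = -1) :
    IsKNice k ((fun z : ℤ × ℤ => (a * z.1 + b * z.2, c * z.1 + d * z.2)) '' Q) ∧
    ((fun z : ℤ × ℤ => (a * z.1 + b * z.2, c * z.1 + d * z.2)) '' Q).ncard = Q.ncard := by
  obtain ⟨h1, h2, h3⟩ := hQ
  have hinj : Function.Injective (fun z : ℤ × ℤ => (a * z.1 + b * z.2, c * z.1 + d * z.2)) := by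
    rintro ⟨x, y⟩ ⟨x', y'⟩ h
    simp only [Prod.mk.injEq] at h
    obtain ⟨e1, e2⟩ := h
    have hx : (a * d - b * c) * (x - x') = 0 := by linear_combination d * e1 - b * e2
    have hy : (a * d - b * c) * (y - y') = 0 := by linear_combination a * e2 - c * e1
    have hne : a * d - b * c ≠ 0 := by omega
    have hx' := (mul_eq_zero.mp hx).resolve_left hne
    have hy' := (mul_eq_zero.mp hy).resolve_left hne
    rw [Prod.mk.injEq]; constructor <;> linarith
  refine ⟨⟨?_, ?_, ?_⟩, Set.ncard_image_of_injective _ hinj⟩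
  · rintro _ ⟨z, hz, rfl⟩
    have hg := Int.isCoprime_iff_gcd_eq_one.mpr (h1 z hz).2
    have hg' : IsCoprime (a * z.1 + b * z.2) (c * z.1 + d * z.2) := by
      obtain ⟨u, v, huv⟩ := hg
      rcases hdet with e | e
      · refine ⟨u * d - v * c, v * a - u * b, ?_⟩
        linear_combination huv + (u * z.1 + v * z.2) * e
      · refine ⟨-(u * d - v * c), -(v * a - u * b), ?_⟩
        linear_combination huv - (u * z.1 + v * z.2) * e
    refine ⟨?_, Int.isCoprime_iff_gcd_eq_one.mp hg'⟩
    intro h0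
    rw [Prod.mk.injEq] at h0
    rw [h0.1, h0.2] at hg'
    exact not_isCoprime_zero_zero hg'
  · rintro _ ⟨z, hz, rfl⟩ ⟨z', hz', h⟩
    have : z' = -z := by
      apply hinj
      rw [h]
      ext <;> simp <;> ring
    exact h2 z hz (this ▸ hz')
  · rintro _ ⟨z, hz, rfl⟩ _ ⟨z', hz', rfl⟩
    have := h3 z hz z' hz'
    have e : (a * z.1 + b * z.2) * (c * z'.1 + d * z'.2) - (a * z'.1 + b * z'.2) * (c * z.1 + d * z.2)
      = (a * d - b * c) * (z.1 * z'.2 - z'.1 * z.2) := by ring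
    show |(a * z.1 + b * z.2) * (c * z'.1 + d * z'.2) - (a * z'.1 + b * z'.2) * (c * z.1 + d * z.2)| ≤ _
    rw [e, abs_mul]
    rcases hdet with e | e <;> rw [e] <;> simpa using this

/-- Flip signs so that second coordinates become non-negative. -/
lemma IsKNice.flip {k : ℕ} {Q : Set (ℤ × ℤ)} (hQ : IsKNice k Q) :
    IsKNice k ((fun z : ℤ × ℤ => if z.2 < 0 then -z else z) '' Q) ∧
    ((fun z : ℤ × ℤ => if z.2 < 0 then -z else z) '' Q).ncard = Q.ncard := by
  obtain ⟨h1, h2, h3⟩ := hQ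
  have hinj : Set.InjOn (fun z : ℤ × ℤ => if z.2 < 0 then -z else z) Q := by
    intro z hz z' hz' h
    simp only at h
    split_ifs at h
    · simpa using h
    · exact absurd (h ▸ hz') (h2 z hz)
    · exact absurd (h ▸ hz) (h2 z' hz')
    · exact h
  refine ⟨⟨?_, ?_, ?_⟩, Set.InjOn.ncard_image hinj⟩
  · rintro _ ⟨z, hz, rfl⟩
    have := h1 z hz
    simp only
    split_ifs
    · refine ⟨?_, by simpa using this.2⟩
      intro h0
      apply this.1
      have : z = -(-z) := by simp
      rw [this, h0]; simp
    · exact this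
  · rintro _ ⟨z, hz, rfl⟩ ⟨z', hz', h⟩
    simp only at h
    split_ifs at h with i1 i2 i2
    · have : z' = -z := by rw [← neg_neg z', h]; simp
      exact h2 z hz (this ▸ hz')
    · have : z' = z := by rw [← neg_neg z', h]; simp
      rw [this] at i1; first | exact i2 i1 | exact i1 i2
    · have : z' = z := by rw [h]; simp
      rw [this] at i1; first | exact i2 i1 | exact i1 i2
    · exact h2 z hz (h ▸ hz')
  · rintro _ ⟨z, hz, rfl⟩ _ ⟨z', hz', rfl⟩
    have := h3 z hz z' hz'
    simp only
    split_ifs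
    · simpa using this
    · have e : (-z).1 * z'.2 - z'.1 * (-z).2 = - (z.1 * z'.2 - z'.1 * z.2) := by simp; ring
      rw [e, abs_neg]; exact this
    · have e : (z).1 * (-z').2 - (-z').1 * (z).2 = - (z.1 * z'.2 - z'.1 * z.2) := by simp; ring
      rw [e, abs_neg]; exact this
    · exact this

/-- The core inequality behind `3 h² ≤ 4 k`. -/
lemma normal_core (h m k : ℤ) (hhz : 0 < h) (hm0 : 0 ≤ m) (hmh : m < h) :
    ∀ x w x' y : ℤ, h ≤ x → |w| ≤ h → h ≤ x' - y → |y| ≤ h →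
      h * x - m * w ≤ k → h * x' - m * y ≤ k → w * x' - x * y ≤ k → 3 * h ^ 2 ≤ 4 * k := by
  intro x w x' y hx hw hxy hy e1 e2 e3
  rw [abs_le] at hw hy
  by_contra hcon
  push Not at hcon
  have a1 : h * h ≤ h * x := mul_le_mul_of_nonneg_left hx hhz.le
  have a2 : h * (h + y) ≤ h * x' := mul_le_mul_of_nonneg_left (by linarith) hhz.le
  have hh2 : 0 < h * h := mul_pos hhz hhz
  have f1 : h * h - m * w ≤ k := by linarith
  have f2 : h * h + (h - m) * y ≤ k := by linarith [a2, e2, mul_add h h y, sub_mul h m y]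
  have hw0 : 0 < w := by
    by_contra hw0
    have : 0 ≤ m * (-w) := mul_nonneg hm0 (by linarith)
    linarith [this, mul_neg m w, sq h]
  have hy0 : y < 0 := by
    by_contra hy0
    have : 0 ≤ (h - m) * y := mul_nonneg (by linarith) (by linarith)
    linarith [sq h]
  have b1 : w * (h + y) ≤ w * x' := mul_le_mul_of_nonneg_left (by linarith) hw0.le
  have b2 : h * (-y) ≤ x * (-y) := mul_le_mul_of_nonneg_right hx (by linarith)
  have f3 : (h + y) * w - h * y ≤ k := by linarith [b1, b2, mul_comm w (h + y), mul_neg h y, mul_neg x y]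
  have g1 : 4 * (m * (h - w)) < 4 * (m * h) - h * h := by linarith [mul_sub m h w, sq h]
  have g2 : 4 * ((h - m) * (h + y)) < 4 * ((h - m) * h) - h * h := by
    linarith [mul_add (h - m) h y, sq h]
  have g3 : h * h < 4 * ((h + y) * (h - w)) := by
    have : (h + y) * (h - w) = h * h - ((h + y) * w - h * y) := by ring
    rw [this]; linarith [sq h]
  have n1 : 0 ≤ m * (h - w) := mul_nonneg hm0 (by linarith)
  have n2 : 0 ≤ (h - m) * (h + y) := mul_nonneg (by linarith) (by linarith)
  have g4 : (4 * (m * (h - w))) * (4 * ((h - m) * (h + y))) ≤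
      (4 * (m * h) - h * h) * (4 * ((h - m) * h) - h * h) := by
    apply mul_le_mul g1.le g2.le (by linarith) (by linarith)
  have hmm : 0 < m * (h - m) := by
    apply mul_pos
    · rcases hm0.lt_or_eq with h' | h'
      · exact h'
      · rw [← h'] at g1; linarith
    · linarith
  have g5 : (m * (h - m)) * (h * h) < (m * (h - m)) * (4 * ((h + y) * (h - w))) :=
    mul_lt_mul_of_pos_left g3 hmm
  have e4 : (4 * (m * (h - w))) * (4 * ((h - m) * (h + y))) =
    4 * ((m * (h - m)) * (4 * ((h + y) * (h - w)))) := by ring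
  have e5 : (4 * (m * h) - h * h) * (4 * ((h - m) * h) - h * h) =
    (h * h) * (16 * (m * (h - m)) - 3 * (h * h)) := by ring
  have g6 : h * h * (4 * (m * (h - m))) < (h * h) * (16 * (m * (h - m)) - 3 * (h * h)) := by
    linarith [e4, e5, g4, g5, mul_comm (h * h) (4 * (m * (h - m)))]
  have g7 := lt_of_mul_lt_mul_left g6 (by positivity)
  nlinarith [sq_nonneg (h - 2 * m)]

/-- Normal form: non-negative second coordinates, top point with `0 ≤ m ≤ h`, and `3 h² ≤ 4 k`. -/
lemma exists_normal {k : ℕ} {Q : Set (ℤ × ℤ)} (hQ : IsKNice k Q) :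
    ∃ Q' : Set (ℤ × ℤ), ∃ h : ℕ, IsKNice k Q' ∧ Q'.ncard = Q.ncard ∧
      (∀ z ∈ Q', 0 ≤ z.2 ∧ z.2 ≤ h) ∧ (h = 0 ∨ ∃ m : ℤ, (m, (h : ℤ)) ∈ Q') ∧ 3 * h ^ 2 ≤ 4 * k := by
  classical
  have hex : ∃ h : ℕ, ∃ Q' : Set (ℤ × ℤ), IsKNice k Q' ∧ Q'.ncard = Q.ncard ∧ HeightLe Q' h := by
    obtain ⟨B, hB⟩ := (hQ.finite.image (fun z : ℤ × ℤ => |z.2|)).bddAbove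
    refine ⟨B.toNat, Q, hQ, rfl, fun p hp => ?_⟩
    have := hB ⟨p, hp, rfl⟩
    have : |p.2| ≤ B := this
    omega
  have hmin := fun m => Nat.find_min hex (m := m)
  obtain ⟨Q₁, hQ₁, hc₁, hh₁⟩ := Nat.find_spec hex
  set h := Nat.find hex with hh
  clear_value h
  rcases Nat.eq_zero_or_pos h with h0 | hpos
  · obtain ⟨hf, hfc⟩ := hQ₁.flip
    refine ⟨_, 0, hf, hfc.trans hc₁, ?_, Or.inl rfl, by simp⟩
    rintro _ ⟨z, hz, rfl⟩
    have := hh₁ z hz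
    rw [h0] at this
    simp only [Nat.cast_zero, abs_nonpos_iff] at this
    simp [this]
  -- the height is attained
  have key : ∀ a b c d : ℤ, (a * d - b * c = 1 ∨ a * d - b * c = -1) →
      ∀ Q₂ : Set (ℤ × ℤ), IsKNice k Q₂ → Q₂.ncard = Q.ncard → ∃ z ∈ Q₂, (h : ℤ) ≤ |c * z.1 + d * z.2| := by
    intro a b c d hd Q₂ hQ₂ hc₂
    by_contra hcon
    push Not at hcon
    obtain ⟨hi, hic⟩ := hQ₂.image a b c d hd
    apply hmin (h - 1) (by omega)
    refine ⟨_, hi, hic.trans hc₂, ?_⟩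
    rintro _ ⟨z, hz, rfl⟩
    have := hcon z hz
    simp only
    omega
  obtain ⟨P, hP, hPh⟩ := key 1 0 0 1 (by norm_num) Q₁ hQ₁ hc₁
  simp only [zero_mul, one_mul, zero_add] at hPh
  obtain ⟨hf, hfc⟩ := hQ₁.flip
  set Q₂ := (fun z : ℤ × ℤ => if z.2 < 0 then -z else z) '' Q₁ with hQ₂
  have hy₂ : ∀ z ∈ Q₂, 0 ≤ z.2 ∧ z.2 ≤ h := by
    rintro _ ⟨z, hz, rfl⟩
    have := hh₁ z hz
    rw [abs_le] at this
    simp only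
    split_ifs
    · simp; omega
    · omega
  have hP₂ : ∃ m : ℤ, (m, (h : ℤ)) ∈ Q₂ := by
    have := hh₁ P hP
    by_cases hneg : P.2 < 0
    · refine ⟨-P.1, P, hP, ?_⟩
      simp only [hneg, if_true]
      rw [abs_of_neg hneg] at *
      ext <;> simp; omega
    · refine ⟨P.1, P, hP, ?_⟩
      simp only [hneg, if_false]
      rw [abs_of_nonneg (not_lt.mp hneg)] at *
      ext <;> simp; omega
  obtain ⟨m₂, hm₂⟩ := hP₂
  have hQ₂c : Q₂.ncard = Q.ncard := hfc.trans hc₁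
  clear_value Q₂
  -- shear
  obtain ⟨hs, hsc⟩ := hf.image 1 (-(m₂ / h)) 0 1 (by norm_num)
  set Q₃ := (fun z : ℤ × ℤ => (1 * z.1 + -(m₂ / h) * z.2, 0 * z.1 + 1 * z.2)) '' Q₂ with hQ₃
  have hy₃ : ∀ z ∈ Q₃, 0 ≤ z.2 ∧ z.2 ≤ h := by
    rintro _ ⟨z, hz, rfl⟩
    simpa using hy₂ z hz
  have hhz : (0 : ℤ) < h := by exact_mod_cast hpos
  have hm₃ : (m₂ % h, (h : ℤ)) ∈ Q₃ := by
    refine ⟨_, hm₂, ?_⟩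
    ext
    · simp; rw [Int.emod_def]; ring
    · simp
  have hQ₃c : Q₃.ncard = Q.ncard := hsc.trans hQ₂c
  clear_value Q₃
  set m := m₂ % h with hm
  have hm0 : 0 ≤ m := Int.emod_nonneg _ hhz.ne'
  have hmh : m < h := Int.emod_lt_of_pos _ hhz
  clear_value m
  refine ⟨Q₃, h, hs, hQ₃c, hy₃, Or.inr ⟨m, hm₃⟩, ?_⟩
  obtain ⟨R, hR, hRx⟩ := key 0 1 1 0 (by norm_num) Q₃ hs hQ₃c
  obtain ⟨S, hS, hSx⟩ := key 0 1 1 (-1) (by norm_num) Q₃ hs hQ₃c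
  have hPR := abs_le.mp (hs.2.2 _ hm₃ _ hR)
  have hPS := abs_le.mp (hs.2.2 _ hm₃ _ hS)
  have hRS := abs_le.mp (hs.2.2 _ hR _ hS)
  have hyR := hy₃ R hR
  have hyS := hy₃ S hS
  obtain ⟨x, w⟩ := R
  obtain ⟨x', y⟩ := S
  simp only [one_mul, zero_mul, add_zero] at hPR hPS hRS hyR hyS hRx hSx
  have core := normal_core (h : ℤ) m k hhz hm0 hmh
  have final : 3 * (h : ℤ) ^ 2 ≤ 4 * k := by
    rcases le_abs.mp hRx with hx | hx <;> rcases le_abs.mp hSx with hx' | hx'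
    · exact core x w x' y hx (abs_le.mpr ⟨by linarith, by linarith⟩) (by linarith)
        (abs_le.mpr ⟨by linarith, by linarith⟩) (by linarith) (by linarith) (by linarith)
    · exact core x w (-x') (-y) hx (abs_le.mpr ⟨by linarith, by linarith⟩) (by linarith)
        (abs_le.mpr ⟨by linarith, by linarith⟩) (by linarith) (by linarith) (by linarith)
    · exact core (-x) (-w) x' y hx (abs_le.mpr ⟨by linarith, by linarith⟩) (by linarith)
        (abs_le.mpr ⟨by linarith, by linarith⟩) (by linarith) (by linarith) (by linarith)
    · exact core (-x) (-w) (-x') (-y) hx (abs_le.mpr ⟨by linarith, by linarith⟩) (by linarith)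
        (abs_le.mpr ⟨by linarith, by linarith⟩) (by linarith) (by linarith) (by linarith)
  exact_mod_cast final


/-! ### The chain relaxation -/

/-- Right ends `U a` and (negated) left ends `W a` of the levels of a nice set of height `h`. -/
structure Chain (k h : ℕ) (U W : ℕ → ℤ) : Prop where
  pos : 1 ≤ h
  pair : ∀ a b : ℕ, 1 ≤ a → a ≤ h → 1 ≤ b → b ≤ h → (b : ℤ) * U a + a * W b ≤ k
  low : ∀ a : ℕ, 1 ≤ a → a ≤ h → -1 ≤ U a + W a
  top : 0 ≤ U h + W h

/-- Number of integers in `[-W, U]` coprime to `a`. -/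
noncomputable def cnt (a : ℕ) (U W : ℤ) : ℕ := ((Finset.Icc (-W) U).filter (fun m => Int.gcd m a = 1)).card

lemma exists_chain {k : ℕ} {Q : Set (ℤ × ℤ)} (hQ : IsKNice k Q) :
    Q.ncard ≤ 1 ∨ ∃ (h : ℕ) (U W : ℕ → ℤ), Chain k h U W ∧ 3 * h ^ 2 ≤ 4 * k ∧
      Q.ncard ≤ 1 + ∑ a ∈ Finset.Icc 1 h, cnt a (U a) (W a) := by
  classical
  obtain ⟨Q', h, hQ', hc, hy, htop, h34⟩ := exists_normal hQ
  have hfin := hQ'.finite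
  obtain ⟨h1, h2, h3⟩ := hQ'
  rw [← hc]
  set F := hfin.toFinset with hF
  have hmem : ∀ z, z ∈ F ↔ z ∈ Q' := fun z => by simp [hF]
  have hcard : Q'.ncard = F.card := Set.ncard_eq_toFinset_card Q' hfin
  -- level zero
  have hz : (F.filter (fun z => z.2 = 0)).card ≤ 1 := by
    rw [Finset.card_le_one]
    intro p hp q hq
    rw [Finset.mem_filter, hmem] at hp hq
    have : p.1 * q.2 - q.1 * p.2 = 0 := by rw [hp.2, hq.2]; ring
    rcases coprime_parallel (h1 p hp.1).2 (h1 q hq.1).2 this with e | e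
    · exact e.symm
    · exact absurd (e ▸ hq.1) (h2 p hp.1)
  rcases htop with h0 | ⟨m₀, hm₀⟩
  · left
    rw [hcard]
    refine le_trans (Finset.card_le_card ?_) hz
    intro z hzF
    rw [Finset.mem_filter]
    have := hy z ((hmem z).mp hzF)
    subst h0
    exact ⟨hzF, by omega⟩
  by_cases hh0 : h = 0
  · left
    rw [hcard]
    refine le_trans (Finset.card_le_card ?_) hz
    intro z hzF
    rw [Finset.mem_filter]
    have := hy z ((hmem z).mp hzF)
    subst hh0
    exact ⟨hzF, by omega⟩
  have hpos : 1 ≤ h := Nat.one_le_iff_ne_zero.mpr hh0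
  have hhz : (0 : ℤ) < h := by exact_mod_cast hpos
  right
  -- ends of one level
  have hends : ∀ a : ℕ, ∃ u w : ℤ,
      (∀ x : ℤ, (x, (a : ℤ)) ∈ Q' → -w ≤ x ∧ x ≤ u) ∧
      (((u, (a : ℤ)) ∈ Q' ∧ (-w, (a : ℤ)) ∈ Q' ∧ 0 ≤ u + w) ∨
        ((∀ x : ℤ, (x, (a : ℤ)) ∉ Q') ∧ h * u ≤ a * m₀ ∧ h * w ≤ -(a * m₀) ∧ -1 ≤ u + w)) := by
    intro a
    set L := (F.filter (fun z => z.2 = (a : ℤ))).image Prod.fst with hL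
    have hLm : ∀ x, x ∈ L ↔ (x, (a : ℤ)) ∈ Q' := by
      intro x
      simp only [hL, Finset.mem_image, Finset.mem_filter, hmem]
      constructor
      · rintro ⟨⟨x', y'⟩, ⟨hin, rfl⟩, rfl⟩; exact hin
      · intro hin; exact ⟨(x, (a : ℤ)), ⟨hin, rfl⟩, rfl⟩
    by_cases hne : L.Nonempty
    · refine ⟨L.max' hne, -(L.min' hne), ?_, Or.inl ⟨?_, ?_, ?_⟩⟩
      · intro x hx
        rw [← hLm] at hx
        exact ⟨by simpa using L.min'_le x hx, L.le_max' x hx⟩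
      · exact (hLm _).mp (L.max'_mem hne)
      · rw [neg_neg]; exact (hLm _).mp (L.min'_mem hne)
      · have := L.min'_le _ (L.max'_mem hne)
        linarith
    · have hno : ∀ x : ℤ, (x, (a : ℤ)) ∉ Q' := by
        intro x hx
        exact hne ⟨x, (hLm x).mpr hx⟩
      refine ⟨(a * m₀) / h, (-(a * m₀)) / h, fun x hx => absurd hx (hno x), Or.inr ⟨hno, ?_, ?_, ?_⟩⟩
      · exact Int.mul_ediv_self_le hhz.ne'
      · exact Int.mul_ediv_self_le hhz.ne'
      · have e1 := Int.lt_mul_ediv_self_add (x := a * m₀) hhz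
        have e2 := Int.lt_mul_ediv_self_add (x := -(a * m₀)) hhz
        have : (h : ℤ) * (-2) < h * ((a * m₀) / h + (-(a * m₀)) / h) := by
          rw [mul_add]; linarith
        have := lt_of_mul_lt_mul_left this hhz.le
        linarith
  choose U W hbd halt using hends
  have hdet : ∀ x y : ℤ, ∀ a b : ℕ, (x, (a : ℤ)) ∈ Q' → (y, (b : ℤ)) ∈ Q' → b * x - a * y ≤ (k : ℤ) := by
    intro x y a b hx hy'
    have := (abs_le.mp (h3 _ hx _ hy')).2
    simp only at this
    linarith
  have hk0 : (0 : ℤ) ≤ k := Int.natCast_nonneg k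
  -- every end against every point
  have hU : ∀ a b : ℕ, a ≤ h → ∀ y : ℤ, (y, (b : ℤ)) ∈ Q' → b * U a - a * y ≤ (k : ℤ) := by
    intro a b ha y hyb
    rcases halt a with ⟨hu, -, -⟩ | ⟨-, hu, -, -⟩
    · exact hdet _ _ _ _ hu hyb
    · have e := hdet _ _ _ _ hm₀ hyb
      have e1 : (a : ℤ) * (b * m₀ - h * y) ≤ a * k := mul_le_mul_of_nonneg_left e (by positivity)
      have e2 : (a : ℤ) * k ≤ h * k := mul_le_mul_of_nonneg_right (by exact_mod_cast ha) hk0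
      have e3 : (b : ℤ) * (h * U a) ≤ b * (a * m₀) := mul_le_mul_of_nonneg_left hu (by positivity)
      have e4 : (h : ℤ) * (b * U a - a * y) ≤ h * k := by linarith
      exact le_of_mul_le_mul_left e4 hhz
  have hW : ∀ a b : ℕ, a ≤ h → ∀ y : ℤ, (y, (b : ℤ)) ∈ Q' → a * y + b * W a ≤ (k : ℤ) := by
    intro a b ha y hyb
    rcases halt a with ⟨-, hu, -⟩ | ⟨-, -, hu, -⟩
    · have := hdet _ _ _ _ hyb hu
      linarith
    · have e := hdet _ _ _ _ hyb hm₀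
      have e1 : (a : ℤ) * (h * y - b * m₀) ≤ a * k := mul_le_mul_of_nonneg_left e (by positivity)
      have e2 : (a : ℤ) * k ≤ h * k := mul_le_mul_of_nonneg_right (by exact_mod_cast ha) hk0
      have e3 : (b : ℤ) * (h * W a) ≤ b * (-(a * m₀)) := mul_le_mul_of_nonneg_left hu (by positivity)
      have e4 : (h : ℤ) * (a * y + b * W a) ≤ h * k := by linarith
      exact le_of_mul_le_mul_left e4 hhz
  refine ⟨h, U, W, ⟨hpos, ?_, ?_, ?_⟩, h34, ?_⟩
  · intro a b _ ha _ hb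
    rcases halt b with ⟨-, hu, -⟩ | ⟨-, -, hu, -⟩
    · have := hU a b ha _ hu
      linarith
    · rcases halt a with ⟨hv, -, -⟩ | ⟨-, hv, -, -⟩
      · have := hW b a hb _ hv
        linarith
      · have e3 : (a : ℤ) * (h * W b) ≤ a * (-(b * m₀)) := mul_le_mul_of_nonneg_left hu (by positivity)
        have e4 : (b : ℤ) * (h * U a) ≤ b * (a * m₀) := mul_le_mul_of_nonneg_left hv (by positivity)
        have e5 : (h : ℤ) * (b * U a + a * W b) ≤ h * 0 := by linarith
        have := le_of_mul_le_mul_left e5 hhz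
        linarith
  · intro a _ _
    rcases halt a with ⟨-, -, hu⟩ | ⟨-, -, -, hu⟩ <;> linarith
  · rcases halt h with ⟨-, -, hu⟩ | ⟨hu, -, -, -⟩
    · exact hu
    · exact absurd hm₀ (hu m₀)
  · rw [hcard]
    have hsub : F ⊆ F.filter (fun z => z.2 = 0) ∪
        (Finset.Icc 1 h).biUnion (fun a => F.filter (fun z => z.2 = (a : ℤ))) := by
      intro z hzF
      have hyz := hy z ((hmem z).mp hzF)
      rw [Finset.mem_union, Finset.mem_filter, Finset.mem_biUnion]
      by_cases h0 : z.2 = 0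
      · exact Or.inl ⟨hzF, h0⟩
      · right
        refine ⟨z.2.toNat, ?_, ?_⟩
        · rw [Finset.mem_Icc]; omega
        · rw [Finset.mem_filter]; refine ⟨hzF, by omega⟩
    refine (Finset.card_le_card hsub).trans ((Finset.card_union_le _ _).trans ?_)
    refine add_le_add hz (Finset.card_biUnion_le.trans (Finset.sum_le_sum ?_))
    intro a _
    unfold cnt
    apply Finset.card_le_card_of_injOn Prod.fst
    · intro z hz'
      rw [Finset.mem_coe, Finset.mem_filter, hmem] at hz'
      obtain ⟨x, y⟩ := z
      obtain ⟨hzQ, rfl⟩ := hz'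
      have b := hbd a x hzQ
      simp only [Finset.coe_filter, Finset.mem_Icc, Set.mem_ofPred_eq]
      exact ⟨b, (h1 _ hzQ).2⟩
    · intro z hz' z' hz''
      rw [Finset.mem_coe, Finset.mem_filter] at hz' hz''
      intro e
      exact Prod.ext e (hz'.2.trans hz''.2.symm)


/-! ### Counting coprime residues -/

/-- Number of `1 ≤ i ≤ r` coprime to `g`. -/
def Cc (g : ℕ) : ℕ → ℕ
  | 0 => 0
  | r + 1 => Cc g r + if Nat.gcd (r + 1) g = 1 then 1 else 0

/-- Number of residues coprime to `g`. -/
def phi (g : ℕ) : ℕ := Cc g (g - 1) + if g = 1 then 1 else 0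

/-- Quasi-periodic counting function. -/
def Fv (g : ℕ) (n : ℤ) : ℤ := phi g * (n / g) + Cc g (n % g).toNat

lemma Fv_step (g : ℕ) (hg : 1 ≤ g) (n : ℤ) :
    Fv g (n + 1) = Fv g n + if Int.gcd (n + 1) g = 1 then 1 else 0 := by
  have hgz : (0 : ℤ) < g := by exact_mod_cast hg
  obtain ⟨r, hr⟩ : ∃ r : ℕ, n % g = r := ⟨(n % g).toNat, by
    have := Int.emod_nonneg n hgz.ne'; omega⟩
  have hrlt : r < g := by
    have := Int.emod_lt_of_pos n hgz; omega
  have hn : n = g * (n / g) + r := by rw [← hr]; exact (Int.mul_ediv_add_emod n g).symm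
  set q := n / g with hq
  have hFn : Fv g n = phi g * q + Cc g r := by
    unfold Fv; rw [hr, ← hq]; simp
  rw [hFn]
  by_cases hlast : r + 1 = g
  · have e : n + 1 = g * (q + 1) := by
      rw [hn, ← hlast]; push_cast; ring
    have hF1 : Fv g (n + 1) = phi g * (q + 1) := by
      unfold Fv
      rw [e, Int.mul_ediv_cancel_left _ hgz.ne', Int.mul_emod_right]
      simp [Cc]
    have hgcd : Int.gcd (n + 1) g = g := by
      rw [e, Int.gcd_comm]; simp [Int.gcd_mul_right_right]
    rw [hF1, hgcd]
    have hphi : (phi g : ℤ) = Cc g r + if g = 1 then 1 else 0 := by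
      unfold phi
      have : g - 1 = r := by omega
      rw [this]; push_cast; rfl
    have := hphi
    linarith
  · have hlt : r + 1 < g := by omega
    have e : n + 1 = g * q + ((r + 1 : ℕ) : ℤ) := by rw [hn]; push_cast; ring
    have e1 : (n + 1) / g = q := by
      rw [e, Int.add_comm, Int.add_mul_ediv_left _ _ hgz.ne', Int.ediv_eq_zero_of_lt (by positivity) (by exact_mod_cast hlt)]
      simp
    have e2 : (n + 1) % g = ((r + 1 : ℕ) : ℤ) := by
      rw [e, Int.add_comm, Int.add_mul_emod_self_left, Int.emod_eq_of_lt (by positivity) (by exact_mod_cast hlt)]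
    have hgcd : Int.gcd (n + 1) g = Nat.gcd (r + 1) g := by
      rw [e, Int.add_comm, Int.gcd_comm]
      simp only [Int.gcd_add_mul_left_right]
      rw [Int.gcd_natCast_natCast, Nat.gcd_comm]
    unfold Fv
    rw [e1, e2, hgcd, Int.toNat_natCast]
    simp only [Cc]
    push_cast
    ring

lemma Fv_anti (g : ℕ) (hg : 1 ≤ g) (n : ℤ) :
    Fv g n + Fv g (-n - 1) = - if g = 1 then 1 else 0 := by
  have hgz : (0 : ℤ) < g := by exact_mod_cast hg
  have step : ∀ n : ℤ, Fv g (n + 1) + Fv g (-(n + 1) - 1) = Fv g n + Fv g (-n - 1) := by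
    intro n
    have h1 := Fv_step g hg n
    have h2 := Fv_step g hg (-(n + 1) - 1)
    have e : -(n + 1) - 1 + 1 = -n - 1 := by ring
    rw [e] at h2
    have e2 : Int.gcd (-n - 1) g = Int.gcd (n + 1) g := by
      have : -n - 1 = -(n + 1) := by ring
      rw [this, Int.neg_gcd]
    rw [e2] at h2
    linarith
  have base : Fv g 0 + Fv g (-0 - 1) = - if g = 1 then 1 else 0 := by
    have h := Fv_step g hg (-1)
    have h0 : Fv g 0 = 0 := by unfold Fv; simp [Cc]
    simp only [Int.reduceNeg, neg_add_cancel, Int.gcd_zero_left, Int.natAbs_natCast] at h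
    simp only [neg_zero, zero_sub]
    linarith
  induction n using Int.induction_on with
  | zero => exact base
  | succ i ih => rw [step, ih]
  | pred i ih =>
    have := step (-(i : ℤ) - 1)
    rw [sub_add_cancel] at this
    rw [← this, ih]

lemma cnt_eq (g : ℕ) (hg : 1 ≤ g) (U W : ℤ) (h : -1 ≤ U + W) :
    (cnt g U W : ℤ) = Fv g U + Fv g W + if g = 1 then 1 else 0 := by
  obtain ⟨n, hn⟩ : ∃ n : ℕ, U = -W - 1 + n := ⟨(U + W + 1).toNat, by omega⟩
  clear h
  induction n generalizing U with
  | zero =>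
    have hW := Fv_anti g hg W
    have : U = -W - 1 := by simpa using hn
    subst this
    have hc : cnt g (-W - 1) W = 0 := by
      unfold cnt
      rw [Finset.Icc_eq_empty (by omega)]
      simp
    rw [hc]
    push_cast
    linarith
  | succ n ih =>
    have hU := Fv_step g hg (U - 1)
    rw [sub_add_cancel] at hU
    have ih' := ih (U - 1) (by rw [hn]; push_cast; ring)
    have hc : cnt g U W = cnt g (U - 1) W + if Int.gcd U g = 1 then 1 else 0 := by
      unfold cnt
      have : Finset.Icc (-W) U = insert U (Finset.Icc (-W) (U - 1)) := by
        ext x; simp only [Finset.mem_Icc, Finset.mem_insert]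
        push_cast at hn
        omega
      rw [this, Finset.filter_insert]
      split_ifs
      · rw [Finset.card_insert_of_notMem]
        simp
      · simp
    rw [hc]
    push_cast
    linarith

lemma cnt_mono {g a : ℕ} (hga : g ∣ a) (U W : ℤ) : cnt a U W ≤ cnt g U W := by
  unfold cnt
  apply Finset.card_le_card
  intro m
  simp only [Finset.mem_filter]
  rintro ⟨h1, h2⟩
  refine ⟨h1, ?_⟩
  have h3 : Int.gcd m g ∣ Int.gcd m a := Int.gcd_dvd_gcd_of_dvd_right m (by exact_mod_cast hga)
  rw [h2] at h3
  exact Nat.dvd_one.mp h3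

/-- Linear bound with excess `e` (scaled by `g`). -/
lemma Fv_lin (g e : ℕ) (hg : 1 ≤ g) (he : ∀ r < g, g * Cc g r ≤ phi g * r + e) (n : ℤ) :
    g * Fv g n ≤ phi g * n + e := by
  have hgz : (0 : ℤ) < g := by exact_mod_cast hg
  obtain ⟨r, hr⟩ : ∃ r : ℕ, n % g = r := ⟨(n % g).toNat, by
    have := Int.emod_nonneg n hgz.ne'; omega⟩
  have hrlt : r < g := by
    have := Int.emod_lt_of_pos n hgz; omega
  have hn : n = g * (n / g) + r := by rw [← hr]; exact (Int.mul_ediv_add_emod n g).symm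
  have := he r hrlt
  have h2 : (g : ℤ) * Cc g r ≤ phi g * r + e := by exact_mod_cast this
  unfold Fv
  rw [hr, Int.toNat_natCast]
  have : (phi g : ℤ) * n = phi g * (g * (n / g)) + phi g * r := by
    conv_lhs => rw [hn]
    ring
  rw [this]
  linarith

/-! ### Small heights -/

lemma small_heights {k h : ℕ} {U W : ℕ → ℤ} (hc : Chain k h U W) (hh : h ≤ 3) :
    1 + ∑ a ∈ Finset.Icc 1 h, cnt a (U a) (W a) ≤ targetSize k := by
  have hpos := hc.pos
  have ht : (k % 6 = 2 ∧ targetSize k = k + 4) ∨ (k % 2 = 1 ∧ targetSize k = k + 3) ∨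
      ((k % 6 = 0 ∨ k % 6 = 4) ∧ targetSize k = k + 2) := by
    unfold targetSize; split_ifs <;> omega
  have c1 := cnt_eq 1 le_rfl (U 1) (W 1) (hc.low 1 le_rfl hpos)
  have F1 : ∀ n : ℤ, Fv 1 n = n := by intro n; simp [Fv, phi, Cc]
  rw [F1, F1, if_pos rfl] at c1
  have p11 := hc.pair 1 1 le_rfl hpos le_rfl hpos
  interval_cases h
  · simp only [Finset.Icc_self, Finset.sum_singleton]
    push_cast at p11
    omega
  · have c2 := cnt_eq 2 (by norm_num) (U 2) (W 2) (hc.low 2 (by norm_num) le_rfl)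
    have F2 : ∀ n : ℤ, Fv 2 n = n / 2 + n % 2 := by
      intro n
      have : n % 2 = 0 ∨ n % 2 = 1 := by omega
      rcases this with h | h <;> simp [Fv, phi, Cc, h]
    rw [F2, F2, if_neg (by norm_num)] at c2
    have p12 := hc.pair 1 2 (by norm_num) (by norm_num) (by norm_num) (by norm_num)
    have p21 := hc.pair 2 1 (by norm_num) (by norm_num) (by norm_num) (by norm_num)
    rw [show Finset.Icc 1 2 = {1, 2} by rfl, Finset.sum_pair (by norm_num)]
    push_cast at p12 p21
    omega
  · have c2 := cnt_eq 2 (by norm_num) (U 2) (W 2) (hc.low 2 (by norm_num) (by norm_num))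
    have c3 := cnt_eq 3 (by norm_num) (U 3) (W 3) (hc.low 3 (by norm_num) le_rfl)
    have F2 : ∀ n : ℤ, Fv 2 n = n / 2 + n % 2 := by
      intro n
      have : n % 2 = 0 ∨ n % 2 = 1 := by omega
      rcases this with h | h <;> simp [Fv, phi, Cc, h]
    have F3 : ∀ n : ℤ, Fv 3 n = 2 * (n / 3) + n % 3 := by
      intro n
      have : n % 3 = 0 ∨ n % 3 = 1 ∨ n % 3 = 2 := by omega
      rcases this with h | h | h <;> simp [Fv, phi, Cc, h]
    rw [F2, F2, if_neg (by norm_num)] at c2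
    rw [F3, F3, if_neg (by norm_num)] at c3
    have p13 := hc.pair 1 3 (by norm_num) (by norm_num) (by norm_num) (by norm_num)
    have p31 := hc.pair 3 1 (by norm_num) (by norm_num) (by norm_num) (by norm_num)
    have p23 := hc.pair 2 3 (by norm_num) (by norm_num) (by norm_num) (by norm_num)
    have p32 := hc.pair 3 2 (by norm_num) (by norm_num) (by norm_num) (by norm_num)
    rw [show Finset.Icc 1 3 = {1, 2, 3} by rfl, Finset.sum_insert (by simp), Finset.sum_pair (by norm_num)]
    push_cast at p13 p31 p23 p32
    -- one side
    have side : ∀ x y z : ℤ, x + 3 * y ≤ k → 2 * x + 3 * z ≤ k →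
        2 * (2 * (x / 3) + x % 3 + y + (z / 2 + z % 2)) + 2 ≤ targetSize k := by
      intro x y z h1 h2
      have : x % 3 = 0 ∨ x % 3 = 1 ∨ x % 3 = 2 := by omega
      rcases this with h | h | h <;> omega
    have s1 := side (U 3) (W 1) (W 2) (by linarith) (by linarith)
    have s2 := side (W 3) (U 1) (U 2) (by linarith) (by linarith)
    omega


/-! ### Elimination with tables (evaluated by the kernel)

A table with entries below `2 ^ 14` is packed into one natural number. -/

/-- `i`-th entry of a packed table. -/
def dg (N i : ℕ) : ℕ := Nat.mod (Nat.shiftRight N (Nat.mul 14 i)) 16384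
/-- Pack the values `f 0, …, f (n-1)`. -/
def pk (f : ℕ → ℕ) (n : ℕ) : ℕ :=
  Nat.rec 0 (fun i ih => Nat.add ih (Nat.shiftLeft (f i) (Nat.mul 14 i))) n
def mx (a b : ℕ) : ℕ := cond (Nat.ble a b) b a
def mxf (f : ℕ → ℕ) (n : ℕ) : ℕ := Nat.rec 0 (fun i ih => mx (f i) ih) n
/-- Packed running maximum, started at `z`. -/
def rmx (f : ℕ → ℕ) (z n : ℕ) : ℕ :=
  Nat.rec 0 (fun i ih => Nat.add ih (Nat.shiftLeft
    (mx (f i) (cond (Nat.beq i 0) z (dg ih (Nat.sub i 1)))) (Nat.mul 14 i))) n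
/-- Packed table of `Cc c`. -/
def ctab (c : ℕ) : ℕ :=
  Nat.rec 0 (fun i ih => Nat.add ih (Nat.shiftLeft
    (cond (Nat.beq i 0) 0 (Nat.add (dg ih (Nat.sub i 1))
      (cond (Nat.beq (Nat.gcd i c) 1) 1 0))) (Nat.mul 14 i))) c

/-- A level `c` with slope `s`, table `T` and a bound `M` for the table. -/
structure Lv where
  c : ℕ
  s : ℕ
  T : ℕ
  M : ℕ

def fresh (c : ℕ) : Lv := ⟨c, cond (Nat.beq c 1) 1 (dg (ctab c) (Nat.sub c 1)), ctab c, c⟩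
def hat (c s T : ℕ) : ℕ := rmx (dg T) (Nat.sub (mxf (dg T) c) s) c
def ev (c s T x : ℕ) : ℕ := Nat.add (Nat.mul s (Nat.div x c)) (dg T (Nat.mod x c))
def elt (k c s H p T : ℕ) : ℕ :=
  pk (fun u => Nat.add (dg T u) (ev c s H (Nat.div (Nat.sub k (Nat.mul c u)) p))) p
/-- Eliminate the level `v` into the level `p`. -/
def elimi (k : ℕ) (v p : Lv) : Lv :=
  ⟨p.c, Nat.sub p.s v.s, elt k v.c v.s (hat v.c v.s v.T) p.c p.T, p.M + v.s * (k / p.c / v.c) + v.M⟩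
def elOk (k : ℕ) (v p : Lv) : Bool :=
  Nat.ble (v.c * (p.c - 1)) k && Nat.ble (p.M + v.s * (k / p.c / v.c) + v.M) 16383
def rootH (k c s T H : ℕ) : ℕ :=
  mxf (fun u => Nat.add (dg T u) (ev c s H (Nat.sub (Nat.div k c) u))) c
def rootv (k : ℕ) (v : Lv) : ℕ :=
  cond (Nat.ble (v.c - 1) (k / v.c)) (rootH k v.c v.s v.T (hat v.c v.s v.T)) 1000000
/-- Two-pointer elimination of all levels; `1000000` signals failure. -/
def dp (k : ℕ) (fuel : ℕ) : Lv → Lv → List ℕ → List ℕ → ℕ :=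
  Nat.rec (fun _ _ _ _ => 1000000) (fun _ ih a b As Bs =>
    cond (Nat.ble a.s b.s)
      (cond (elOk k a b)
        (match As with
        | x :: t => ih (fresh x) (elimi k a b) t Bs
        | [] => match Bs with
          | [] => rootv k (elimi k a b)
          | _ :: _ => 1000000)
        1000000)
      (cond (elOk k b a)
        (match Bs with
        | x :: t => ih (elimi k b a) (fresh x) As t
        | [] => match As with
          | [] => rootv k (elimi k b a)
          | _ :: _ => 1000000)
        1000000)) fuel

lemma dg_eq (N i : ℕ) : dg N i = N / 2 ^ (14 * i) % 16384 := by
  show (N >>> (14 * i)) % 16384 = _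
  rw [Nat.shiftRight_eq_div_pow]

lemma mx_eq (a b : ℕ) : mx a b = max a b := by
  unfold mx
  rcases h : Nat.ble a b with _ | _
  · have : ¬ a ≤ b := by rw [← Nat.ble_eq]; simp [h]
    simp; omega
  · have : a ≤ b := Nat.le_of_ble_eq_true h
    simp; omega

lemma pk_succ (f : ℕ → ℕ) (n : ℕ) : pk f (n + 1) = pk f n + f n * 2 ^ (14 * n) := by
  show pk f n + (f n) <<< (14 * n) = _
  rw [Nat.shiftLeft_eq]

lemma pk_lt (f : ℕ → ℕ) (n : ℕ) (hf : ∀ i < n, f i < 16384) : pk f n < 2 ^ (14 * n) := by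
  induction n with
  | zero => simp [pk]
  | succ n ih =>
    rw [pk_succ]
    have h1 := ih (fun i hi => hf i (by omega))
    have h2 : (f n + 1) * 2 ^ (14 * n) ≤ 16384 * 2 ^ (14 * n) :=
      Nat.mul_le_mul_right _ (hf n (by omega))
    have h3 : 2 ^ (14 * (n + 1)) = 16384 * 2 ^ (14 * n) := by
      rw [Nat.mul_add, pow_add]; norm_num; ring
    rw [h3]
    linarith

lemma dg_pk (f : ℕ → ℕ) (n : ℕ) (hf : ∀ i < n, f i < 16384) : ∀ i < n, dg (pk f n) i = f i := by
  induction n with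
  | zero => intro i hi; omega
  | succ n ih =>
    intro i hi
    rw [pk_succ, dg_eq]
    rcases Nat.lt_succ_iff_lt_or_eq.mp hi with h | h
    · have := ih (fun i hi => hf i (by omega)) i h
      rw [dg_eq] at this
      rw [← this]
      have e : f n * 2 ^ (14 * n) = 2 ^ (14 * i) * (16384 * (f n * 2 ^ (14 * (n - i - 1)))) := by
        have : 14 * n = 14 * i + 14 + 14 * (n - i - 1) := by omega
        rw [this, pow_add, pow_add]; norm_num; ring
      rw [e, Nat.add_mul_div_left _ _ (by positivity), Nat.add_mul_mod_self_left]
    · subst h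
      rw [Nat.add_mul_div_right _ _ (by positivity),
        Nat.div_eq_of_lt (pk_lt f i (fun j hj => hf j (by omega))), zero_add]
      exact Nat.mod_eq_of_lt (hf i (by omega))

lemma le_mxf (f : ℕ → ℕ) (n i : ℕ) (hi : i < n) : f i ≤ mxf f n := by
  induction n with
  | zero => omega
  | succ n ih =>
    show f i ≤ mx (f n) (mxf f n)
    rw [mx_eq]
    rcases Nat.lt_succ_iff_lt_or_eq.mp hi with h | h
    · exact (ih h).trans (le_max_right _ _)
    · subst h; exact le_max_left _ _

lemma mxf_le (f : ℕ → ℕ) (n M : ℕ) (h : ∀ i < n, f i ≤ M) : mxf f n ≤ M := by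
  induction n with
  | zero => simp [mxf]
  | succ n ih =>
    show mx (f n) (mxf f n) ≤ M
    rw [mx_eq]
    exact max_le (h n (by omega)) (ih (fun i hi => h i (by omega)))

/-- Running maximum, unpacked. -/
def rm (f : ℕ → ℕ) (z : ℕ) : ℕ → ℕ
  | 0 => max (f 0) z
  | n + 1 => max (f (n + 1)) (rm f z n)

lemma rm_le (f : ℕ → ℕ) (z M n : ℕ) (h : ∀ i ≤ n, f i ≤ M) (hz : z ≤ M) : rm f z n ≤ M := by
  induction n with
  | zero => exact max_le (h 0 le_rfl) hz
  | succ n ih => exact max_le (h _ le_rfl) (ih (fun i hi => h i (by omega)))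

lemma le_rm (f : ℕ → ℕ) (z n : ℕ) : z ≤ rm f z n ∧ ∀ i ≤ n, f i ≤ rm f z n := by
  induction n with
  | zero =>
    refine ⟨le_max_right _ _, fun i hi => ?_⟩
    obtain rfl : i = 0 := by omega
    exact le_max_left _ _
  | succ n ih =>
    refine ⟨ih.1.trans (le_max_right _ _), fun i hi => ?_⟩
    rcases Nat.le_succ_iff.mp hi with h | h
    · exact (ih.2 i h).trans (le_max_right _ _)
    · subst h; exact le_max_left _ _

lemma rmx_eq (f : ℕ → ℕ) (z n : ℕ) (hf : ∀ i < n, f i < 16384) (hz : z < 16384) :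
    rmx f z n = pk (rm f z) n := by
  induction n with
  | zero => rfl
  | succ n ih =>
    have ih' := ih (fun i hi => hf i (by omega))
    show rmx f z n + (mx (f n) (cond (Nat.beq n 0) z (dg (rmx f z n) (n - 1)))) <<< (14 * n) = _
    rw [pk_succ, Nat.shiftLeft_eq, ih', mx_eq]
    congr 2
    cases n with
    | zero => rfl
    | succ m =>
      have : dg (pk (rm f z) (m + 1)) m = rm f z m := by
        apply dg_pk
        · intro i hi
          exact Nat.lt_of_le_of_lt (rm_le f z 16383 i (fun j hj => by
            have := hf j (by omega); omega) (by omega)) (by norm_num)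
        · omega
      show max (f (m + 1)) (dg (pk (rm f z) (m + 1)) m) = max (f (m + 1)) (rm f z m)
      rw [this]

lemma Cc_le (g r : ℕ) : Cc g r ≤ r := by
  induction r with
  | zero => simp [Cc]
  | succ r ih => simp only [Cc]; split_ifs <;> omega

lemma ctab_eq (c : ℕ) (hc : c ≤ 16383) : ctab c = pk (Cc c) c := by
  have gen : ∀ n ≤ c, (Nat.rec 0 (fun i ih => Nat.add ih (Nat.shiftLeft
    (cond (Nat.beq i 0) 0 (Nat.add (dg ih (Nat.sub i 1))
      (cond (Nat.beq (Nat.gcd i c) 1) 1 0))) (Nat.mul 14 i))) n : ℕ) = pk (Cc c) n := by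
    intro n hn
    induction n with
    | zero => rfl
    | succ n ih =>
      have ih' := ih (by omega)
      simp only [ih', pk_succ]
      show pk (Cc c) n + (cond (Nat.beq n 0) 0 (dg (pk (Cc c) n) (n - 1) +
        (cond (Nat.beq (Nat.gcd n c) 1) 1 0))) <<< (14 * n) = _
      rw [Nat.shiftLeft_eq]
      congr 2
      cases n with
      | zero => rfl
      | succ m =>
        have : dg (pk (Cc c) (m + 1)) m = Cc c m := by
          apply dg_pk
          · intro i hi
            have := Cc_le c i
            omega
          · omega
        show dg (pk (Cc c) (m + 1)) m + (cond (Nat.beq (Nat.gcd (m + 1) c) 1) 1 0) = _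
        rw [this]
        simp only [Cc]
        congr 1
        by_cases h : Nat.gcd (m + 1) c = 1
        · rw [if_pos h]
          have : Nat.beq (Nat.gcd (m + 1) c) 1 = true := by rw [h]; rfl
          rw [this]; rfl
        · rw [if_neg h]
          have : Nat.beq (Nat.gcd (m + 1) c) 1 = false := by
            rw [Bool.eq_false_iff]; intro hb; exact h (Nat.eq_of_beq_eq_true hb)
          rw [this]; rfl
  exact gen c le_rfl

/-- Validity of a level. -/
structure Lv.Ok (v : Lv) : Prop where
  cpos : 1 ≤ v.c
  bd : ∀ i < v.c, dg v.T i ≤ v.M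
  M_le : v.M ≤ 16383

/-- Value of a quasi-periodic function. -/
def qv (c s T : ℕ) (x : ℤ) : ℤ := s * (x / c) + dg T (x % c).toNat

lemma qv_shift (c s T : ℕ) (hc : 1 ≤ c) (x q : ℤ) : qv c s T (x - c * q) = qv c s T x - s * q := by
  have hcz : (c : ℤ) ≠ 0 := by positivity
  unfold qv
  have e : x - c * q = x + c * (-q) := by ring
  rw [e, Int.add_mul_ediv_left _ _ hcz, Int.add_mul_emod_self_left]
  ring

lemma qv_nat (c s T x : ℕ) : qv c s T x = ev c s T x := by
  unfold qv
  show _ = ((s * (x / c) + dg T (x % c) : ℕ) : ℤ)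
  push_cast
  congr 2

lemma dg_hat {c s T M : ℕ} (hb : ∀ i < c, dg T i ≤ M) (hM : M ≤ 16383) :
    ∀ i < c, dg (hat c s T) i = rm (dg T) (mxf (dg T) c - s) i := by
  have hm : mxf (dg T) c ≤ M := mxf_le _ _ _ hb
  intro i hi
  have e : hat c s T = pk (rm (dg T) (mxf (dg T) c - s)) c := by
    apply rmx_eq
    · intro i hi; have := hb i hi; omega
    · show mxf (dg T) c - s < _
      omega
  rw [e]
  apply dg_pk
  · intro j hj
    have := rm_le (dg T) (mxf (dg T) c - s) M j (fun l hl => hb l (by omega)) (by omega)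
    omega
  · exact hi

lemma dg_hat_le {c s T M : ℕ} (hb : ∀ i < c, dg T i ≤ M) (hM : M ≤ 16383) :
    ∀ i < c, dg (hat c s T) i ≤ M := by
  intro i hi
  rw [dg_hat hb hM i hi]
  have hm : mxf (dg T) c ≤ M := mxf_le _ _ _ hb
  exact rm_le _ _ M i (fun l hl => hb l (by omega)) (by omega)

lemma qv_le_hat {c s T M : ℕ} (hc : 1 ≤ c) (hb : ∀ i < c, dg T i ≤ M) (hM : M ≤ 16383) {y x : ℤ}
    (hyx : y ≤ x) : qv c s T y ≤ qv c s (hat c s T) x := by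
  have hcz : (0 : ℤ) < c := by exact_mod_cast hc
  obtain ⟨r, hr⟩ : ∃ r : ℕ, y % c = r := ⟨(y % c).toNat, by
    have := Int.emod_nonneg y hcz.ne'; omega⟩
  obtain ⟨t, ht⟩ : ∃ t : ℕ, x % c = t := ⟨(x % c).toNat, by
    have := Int.emod_nonneg x hcz.ne'; omega⟩
  have hrlt : r < c := by have := Int.emod_lt_of_pos y hcz; omega
  have htlt : t < c := by have := Int.emod_lt_of_pos x hcz; omega
  unfold qv
  rw [hr, ht, Int.toNat_natCast, Int.toNat_natCast, dg_hat hb hM t htlt]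
  have hle := le_rm (dg T) (mxf (dg T) c - s) t
  have hdiv : y / c ≤ x / c := Int.ediv_le_ediv hcz hyx
  have ey := Int.mul_ediv_add_emod y c
  have ex := Int.mul_ediv_add_emod x c
  rcases hdiv.lt_or_eq with h | h
  · have h1 := le_mxf (dg T) c r hrlt
    have h2 : dg T r ≤ rm (dg T) (mxf (dg T) c - s) t + s := by omega
    have h3 : (s : ℤ) * (y / c) ≤ s * (x / c - 1) := mul_le_mul_of_nonneg_left (by omega) (by positivity)
    have h4 : (dg T r : ℤ) ≤ rm (dg T) (mxf (dg T) c - s) t + s := by exact_mod_cast h2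
    rw [mul_sub, mul_one] at h3
    linarith
  · rw [h] at ey ⊢
    have : r ≤ t := by
      have : (r : ℤ) ≤ t := by rw [← hr, ← ht]; linarith
      exact_mod_cast this
    have := hle.2 r this
    have : (dg T r : ℤ) ≤ rm (dg T) (mxf (dg T) c - s) t := by exact_mod_cast this
    linarith

lemma elimi_spec {k : ℕ} {v p : Lv} (hv : v.Ok) (hp : p.Ok) (hs : v.s ≤ p.s) (hok : elOk k v p = true) :
    (elimi k v p).Ok ∧ (elimi k v p).c = p.c ∧
    ∀ x y : ℤ, v.c * x + p.c * y ≤ k →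
      qv v.c v.s v.T y + qv p.c p.s p.T x ≤ qv p.c (elimi k v p).s (elimi k v p).T x := by
  unfold elOk at hok
  rw [Bool.and_eq_true, Nat.ble_eq, Nat.ble_eq] at hok
  obtain ⟨hk, hM⟩ := hok
  have hpz : (0 : ℤ) < p.c := by exact_mod_cast hp.cpos
  have hvz : (0 : ℤ) < v.c := by exact_mod_cast hv.cpos
  set H := hat v.c v.s v.T with hH
  have hHb := dg_hat_le (s := v.s) hv.bd hv.M_le
  rw [← hH] at hHb
  set f : ℕ → ℕ := fun u => dg p.T u + ev v.c v.s H ((k - v.c * u) / p.c) with hf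
  have hT : (elimi k v p).T = pk f p.c := rfl
  have hfb : ∀ i < p.c, f i ≤ p.M + v.s * (k / p.c / v.c) + v.M := by
    intro i hi
    have h1 := hp.bd i hi
    have h2 : ev v.c v.s H ((k - v.c * i) / p.c) ≤ v.s * (k / p.c / v.c) + v.M := by
      show v.s * ((k - v.c * i) / p.c / v.c) + dg H ((k - v.c * i) / p.c % v.c) ≤ _
      apply add_le_add
      · apply Nat.mul_le_mul_left
        apply Nat.div_le_div_right
        apply Nat.div_le_div_right
        omega
      · apply hHb
        exact Nat.mod_lt _ hv.cpos
    simp only [hf]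
    omega
  have hdg : ∀ i < p.c, dg (elimi k v p).T i = f i := by
    intro i hi
    rw [hT]
    apply dg_pk _ _ _ _ hi
    intro j hj
    have := hfb j hj
    omega
  refine ⟨⟨hp.cpos, ?_, hM⟩, rfl, ?_⟩
  · intro i hi
    rw [hdg i hi]
    exact hfb i hi
  · intro x y hxy
    obtain ⟨r, hr⟩ : ∃ r : ℕ, x % p.c = r := ⟨(x % p.c).toNat, by
      have := Int.emod_nonneg x hpz.ne'; omega⟩
    have hrlt : r < p.c := by have := Int.emod_lt_of_pos x hpz; omega
    have ex := Int.mul_ediv_add_emod x p.c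
    set q := x / p.c with hq
    have hcr : v.c * r ≤ k := le_trans (Nat.mul_le_mul_left _ (by omega)) hk
    -- bound on y
    have hy : y ≤ (((k - v.c * r) / p.c : ℕ) : ℤ) - v.c * q := by
      have h1 : (p.c : ℤ) * (y + v.c * q) ≤ ((k - v.c * r : ℕ) : ℤ) := by
        rw [Nat.cast_sub hcr]
        push_cast
        rw [hr] at ex
        rw [← ex] at hxy
        linarith
      have h2 : y + v.c * q ≤ ((k - v.c * r : ℕ) : ℤ) / p.c := by
        rw [Int.le_ediv_iff_mul_le hpz]; linarith
      push_cast at h2 ⊢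
      linarith
    have h1 := qv_le_hat (s := v.s) hv.cpos hv.bd hv.M_le hy
    rw [qv_shift _ _ _ hv.cpos, qv_nat, ← hH] at h1
    have h2 : qv p.c (elimi k v p).s (elimi k v p).T x = (p.s - v.s : ℕ) * q + f r := by
      unfold qv
      rw [hr, Int.toNat_natCast, hdg r hrlt]
      rfl
    have h3 : qv p.c p.s p.T x = p.s * q + dg p.T r := by
      unfold qv
      rw [hr, Int.toNat_natCast]
    rw [h2, h3, Nat.cast_sub hs]
    simp only [hf]
    push_cast
    linarith

lemma rootv_spec {k : ℕ} {v : Lv} (hv : v.Ok) (h : rootv k v < 1000000) (x y : ℤ)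
    (hxy : (v.c : ℤ) * x + v.c * y ≤ k) : qv v.c v.s v.T x + qv v.c v.s v.T y ≤ rootv k v := by
  have hvz : (0 : ℤ) < v.c := by exact_mod_cast hv.cpos
  unfold rootv at h ⊢
  rcases hb : Nat.ble (v.c - 1) (k / v.c) with _ | _
  · rw [hb] at h; simp at h
  rw [Nat.ble_eq] at hb
  simp only [cond_true]
  obtain ⟨r, hr⟩ : ∃ r : ℕ, x % v.c = r := ⟨(x % v.c).toNat, by
    have := Int.emod_nonneg x hvz.ne'; omega⟩
  have hrlt : r < v.c := by have := Int.emod_lt_of_pos x hvz; omega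
  have ex := Int.mul_ediv_add_emod x v.c
  set q := x / v.c with hq
  have hy : y ≤ ((k / v.c - r : ℕ) : ℤ) - v.c * q := by
    have h2 : x + y ≤ (k : ℤ) / v.c := by
      rw [Int.le_ediv_iff_mul_le hvz]; linarith
    rw [Nat.cast_sub (by omega)]
    push_cast
    rw [hr] at ex
    linarith
  have h1 := qv_le_hat (s := v.s) hv.cpos hv.bd hv.M_le hy
  rw [qv_shift _ _ _ hv.cpos, qv_nat] at h1
  have h3 : qv v.c v.s v.T x = v.s * q + dg v.T r := by
    unfold qv
    rw [hr, Int.toNat_natCast]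
  have h4 : dg v.T r + ev v.c v.s (hat v.c v.s v.T) (k / v.c - r) ≤
      rootH k v.c v.s v.T (hat v.c v.s v.T) :=
    le_mxf (fun u => Nat.add (dg v.T u) (ev v.c v.s (hat v.c v.s v.T) (Nat.sub (Nat.div k v.c) u))) v.c r hrlt
  have h5 : (dg v.T r : ℤ) + ev v.c v.s (hat v.c v.s v.T) (k / v.c - r) ≤
      rootH k v.c v.s v.T (hat v.c v.s v.T) := by exact_mod_cast h4
  rw [h3]
  linarith

lemma fresh_spec (c : ℕ) (hc : 1 ≤ c) (hc' : c ≤ 16383) :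
    (fresh c).Ok ∧ ∀ x, qv (fresh c).c (fresh c).s (fresh c).T x = Fv c x := by
  have hT : (fresh c).T = pk (Cc c) c := ctab_eq c hc'
  have hlt : ∀ i < c, Cc c i < 16384 := fun i hi => by have := Cc_le c i; omega
  have hd : ∀ i < c, dg (fresh c).T i = Cc c i := by
    rw [hT]; exact dg_pk _ _ hlt
  have hs : (fresh c).s = phi c := by
    show cond (Nat.beq c 1) 1 (dg (fresh c).T (c - 1)) = _
    unfold phi
    by_cases h1 : c = 1
    · subst h1; simp [Cc]
    · have : Nat.beq c 1 = false := by
        rw [Bool.eq_false_iff]; intro hb; exact h1 (Nat.eq_of_beq_eq_true hb)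
      rw [this, if_neg h1, hd _ (by omega)]; rfl
  refine ⟨⟨hc, ?_, hc'⟩, ?_⟩
  · intro i hi
    rw [hd i hi]
    have := Cc_le c i
    show _ ≤ c
    have : i < c := hi
    omega
  · intro x
    have hcz : (0 : ℤ) < c := by exact_mod_cast hc
    show ((fresh c).s : ℤ) * (x / c) + dg (fresh c).T (x % c).toNat = _
    rw [hs, hd _ (by have := Int.emod_lt_of_pos x hcz; have := Int.emod_nonneg x hcz.ne'; omega)]
    rfl

section dpsound
variable {k h : ℕ} {U W : ℕ → ℤ}

/-- Two-sided value of a level. -/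
def P2 (U W : ℕ → ℤ) (v : Lv) : ℤ := qv v.c v.s v.T (U v.c) + qv v.c v.s v.T (W v.c)
def F2 (U W : ℕ → ℤ) (c : ℕ) : ℤ := Fv c (U c) + Fv c (W c)

lemma elim_P2 (hc : Chain k h U W) {v p : Lv} (hv : v.Ok) (hp : p.Ok) (hvh : v.c ≤ h) (hph : p.c ≤ h)
    (hs : v.s ≤ p.s) (hok : elOk k v p = true) :
    P2 U W v + P2 U W p ≤ P2 U W (elimi k v p) := by
  obtain ⟨-, h2, h3⟩ := elimi_spec hv hp hs hok
  have e1 := h3 (U p.c) (W v.c) (hc.pair _ _ hp.cpos hph hv.cpos hvh)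
  have e2 := h3 (W p.c) (U v.c) (by have := hc.pair _ _ hv.cpos hvh hp.cpos hph; linarith)
  unfold P2
  rw [h2]
  linarith

lemma dp_succ (k n : ℕ) (a b : Lv) (As Bs : List ℕ) :
    dp k (n + 1) a b As Bs = cond (Nat.ble a.s b.s)
      (cond (elOk k a b)
        (match As with
        | x :: t => dp k n (fresh x) (elimi k a b) t Bs
        | [] => match Bs with
          | [] => rootv k (elimi k a b)
          | _ :: _ => 1000000)
        1000000)
      (cond (elOk k b a)
        (match Bs with
        | x :: t => dp k n (elimi k b a) (fresh x) As t
        | [] => match As with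
          | [] => rootv k (elimi k b a)
          | _ :: _ => 1000000)
        1000000) := rfl

lemma dp_sound (hc : Chain k h U W) (hh : h ≤ 16383) (fuel : ℕ) : ∀ (a b : Lv) (As Bs : List ℕ),
    a.Ok → b.Ok → a.c ≤ h → b.c ≤ h → (∀ x ∈ As, 1 ≤ x ∧ x ≤ h) → (∀ x ∈ Bs, 1 ≤ x ∧ x ≤ h) →
    dp k fuel a b As Bs < 1000000 →
    P2 U W a + P2 U W b + (As.map (F2 U W)).sum + (Bs.map (F2 U W)).sum ≤ dp k fuel a b As Bs := by
  have hfresh : ∀ x, 1 ≤ x → x ≤ h → (fresh x).Ok ∧ P2 U W (fresh x) = F2 U W x := by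
    intro x h1 h2
    obtain ⟨e1, e2⟩ := fresh_spec x h1 (h2.trans hh)
    exact ⟨e1, by unfold P2 F2; rw [e2, e2]; rfl⟩
  induction fuel with
  | zero => intro a b As Bs _ _ _ _ _ _ hlt; exact absurd hlt (by simp [dp])
  | succ n ih =>
    intro a b As Bs ha hb hah hbh hA hB
    rw [dp_succ]
    rcases hcmp : Nat.ble a.s b.s with _ | _
    · have hs : b.s ≤ a.s := by
        have : ¬ a.s ≤ b.s := by rw [← Nat.ble_eq]; simp [hcmp]
        omega
      simp only [cond_false]
      rcases hok : elOk k b a with _ | _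
      · simp
      simp only [cond_true]
      have hE := elim_P2 hc hb ha hbh hah hs hok
      obtain ⟨hEok, hEc, -⟩ := elimi_spec hb ha hs hok
      cases Bs with
      | cons x t =>
        intro hlt
        obtain ⟨hx1, hx2⟩ := hB x (by simp)
        obtain ⟨f1, f2⟩ := hfresh x hx1 hx2
        have := ih (elimi k b a) (fresh x) As t hEok f1 (by rw [hEc]; exact hah) hx2 hA
          (fun y hy => hB y (by simp [hy])) hlt
        simp only [List.map_cons, List.sum_cons]
        linarith
      | nil =>
        cases As with
        | nil =>
          intro hlt
          have := rootv_spec hEok hlt (U a.c) (W a.c) (by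
            rw [hEc]; exact hc.pair _ _ ha.cpos hah ha.cpos hah)
          have e : P2 U W (elimi k b a) ≤ rootv k (elimi k b a) := this
          simp only [List.map_nil, List.sum_nil]
          linarith
        | cons x t => simp
    · have hs : a.s ≤ b.s := by rwa [Nat.ble_eq] at hcmp
      simp only [cond_true]
      rcases hok : elOk k a b with _ | _
      · simp
      simp only [cond_true]
      have hE := elim_P2 hc ha hb hah hbh hs hok
      obtain ⟨hEok, hEc, -⟩ := elimi_spec ha hb hs hok
      cases As with
      | cons x t =>
        intro hlt
        obtain ⟨hx1, hx2⟩ := hA x (by simp)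
        obtain ⟨f1, f2⟩ := hfresh x hx1 hx2
        have := ih (fresh x) (elimi k a b) t Bs f1 hEok hx2 (by rw [hEc]; exact hbh)
          (fun y hy => hA y (by simp [hy])) hB hlt
        simp only [List.map_cons, List.sum_cons]
        linarith
      | nil =>
        cases Bs with
        | nil =>
          intro hlt
          have := rootv_spec hEok hlt (U b.c) (W b.c) (by
            rw [hEc]; exact hc.pair _ _ hb.cpos hbh hb.cpos hbh)
          have e : P2 U W (elimi k a b) ≤ rootv k (elimi k a b) := this
          simp only [List.map_nil, List.sum_nil]
          linarith
        | cons x t => simp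

end dpsound


/-! ### The table bound for chains -/

lemma Chain.mono {k k' h : ℕ} {U W : ℕ → ℤ} (hc : Chain k h U W) (hk : k ≤ k') : Chain k' h U W :=
  ⟨hc.pos, fun a b h1 h2 h3 h4 => (hc.pair a b h1 h2 h3 h4).trans (by exact_mod_cast hk), hc.low, hc.top⟩

/-- Run the elimination along the order `l`, with the meeting point after `r` entries. -/
def dpO (l : List ℕ) (r k : ℕ) : ℕ :=
  match l.take r, (l.drop r).reverse with
  | a :: As, b :: Bs => dp k l.length (fresh a) (fresh b) As Bs
  | _, _ => 1000000

/-- Evaluate the argument before continuing. -/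
def force (v : ℕ) (f : ℕ → Bool) : Bool := Nat.rec (f 0) (fun n _ => f (Nat.succ n)) v

lemma force_eq (v : ℕ) (f : ℕ → Bool) : force v f = f v := by
  cases v <;> rfl

/-- Descending cover of `[bot, top]` by intervals `[dpO k, k]`. -/
def cov (l : List ℕ) (r bot : ℕ) (fuel : ℕ) : ℕ → Bool :=
  Nat.rec (fun _ => false) (fun _ ih top => force (dpO l r top) fun v =>
    cond (Nat.ble v top) (cond (Nat.ble v bot) true (ih (Nat.sub v 1))) false) fuel

lemma sum_cnt_eq {k h : ℕ} {U W : ℕ → ℤ} (hc : Chain k h U W) :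
    ((1 + ∑ a ∈ Finset.Icc 1 h, cnt a (U a) (W a) : ℕ) : ℤ) =
      2 + ((List.range' 1 h).map (F2 U W)).sum := by
  have e1 : ((List.range' 1 h).map (F2 U W)).sum = ∑ a ∈ Finset.Icc 1 h, F2 U W a := by
    have : Finset.Icc 1 h = (List.range' 1 h).toFinset := by
      ext x; simp [List.mem_range'_1]; omega
    rw [this, List.sum_toFinset _ (List.nodup_range' (s := 1) (n := h) (step := 1))]
  have e2 : ∑ a ∈ Finset.Icc 1 h, (if a = 1 then (1 : ℤ) else 0) = 1 := by
    rw [Finset.sum_ite_eq' (Finset.Icc 1 h) 1]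
    simp [hc.pos]
  have e3 : ∑ a ∈ Finset.Icc 1 h, (cnt a (U a) (W a) : ℤ) =
      ∑ a ∈ Finset.Icc 1 h, (F2 U W a + if a = 1 then (1 : ℤ) else 0) := by
    apply Finset.sum_congr rfl
    intro a ha
    rw [Finset.mem_Icc] at ha
    rw [cnt_eq a ha.1 _ _ (hc.low a ha.1 ha.2)]
    rfl
  push_cast
  rw [e3, Finset.sum_add_distrib, e2, e1]
  ring

lemma dpO_sound {k h : ℕ} {U W : ℕ → ℤ} (hc : Chain k h U W) (hh : h ≤ 16383) (l : List ℕ) (r : ℕ)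
    (hl : l.Perm (List.range' 1 h)) (hlt : dpO l r k < 1000000) :
    1 + ∑ a ∈ Finset.Icc 1 h, cnt a (U a) (W a) ≤ 2 + dpO l r k := by
  have key : ((List.range' 1 h).map (F2 U W)).sum ≤ dpO l r k := by
    rw [← (hl.map (F2 U W)).sum_eq]
    have hm : ∀ x ∈ l, 1 ≤ x ∧ x ≤ h := by
      intro x hx
      have := hl.mem_iff.mp hx
      rw [List.mem_range'_1] at this
      omega
    have hs : (l.map (F2 U W)).sum = ((l.take r).map (F2 U W)).sum +
        (((l.drop r).reverse).map (F2 U W)).sum := by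
      conv_lhs => rw [← List.take_append_drop r l]
      rw [List.map_append, List.sum_append, List.map_reverse, List.sum_reverse]
    rw [hs]
    have hm1 : ∀ x ∈ l.take r, 1 ≤ x ∧ x ≤ h := fun x hx => hm x (List.mem_of_mem_take hx)
    have hm2 : ∀ x ∈ (l.drop r).reverse, 1 ≤ x ∧ x ≤ h := fun x hx =>
      hm x (List.mem_of_mem_drop (List.mem_reverse.mp hx))
    unfold dpO at hlt ⊢
    generalize l.take r = A at *
    generalize (l.drop r).reverse = B at *
    cases A with
    | nil => simp at hlt
    | cons a As =>
      cases B with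
      | nil => simp at hlt
      | cons b Bs =>
        simp only at hlt ⊢
        obtain ⟨a1, a2⟩ := hm1 a (by simp)
        obtain ⟨b1, b2⟩ := hm2 b (by simp)
        obtain ⟨fa, fa'⟩ := fresh_spec a a1 (a2.trans hh)
        obtain ⟨fb, fb'⟩ := fresh_spec b b1 (b2.trans hh)
        have := dp_sound hc hh l.length (fresh a) (fresh b) As Bs fa fb a2 b2
          (fun x hx => hm1 x (by simp [hx])) (fun x hx => hm2 x (by simp [hx])) hlt
        have ea : P2 U W (fresh a) = F2 U W a := by unfold P2 F2; rw [fa', fa']; rfl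
        have eb : P2 U W (fresh b) = F2 U W b := by unfold P2 F2; rw [fb', fb']; rfl
        rw [ea, eb] at this
        simp only [List.map_cons, List.sum_cons]
        linarith
  have := sum_cnt_eq hc
  have h2 : ((1 + ∑ a ∈ Finset.Icc 1 h, cnt a (U a) (W a) : ℕ) : ℤ) ≤ ((2 + dpO l r k : ℕ) : ℤ) := by
    rw [this]; push_cast; linarith
  exact_mod_cast h2

lemma cov_sound {h : ℕ} {U W : ℕ → ℤ} (hh : h ≤ 16383) (l : List ℕ) (r bot : ℕ)
    (hl : l.Perm (List.range' 1 h)) (fuel : ℕ) : ∀ top : ℕ, top < 1000000 → cov l r bot fuel top = true →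
    ∀ k, bot ≤ k → k ≤ top → Chain k h U W →
    1 + ∑ a ∈ Finset.Icc 1 h, cnt a (U a) (W a) ≤ k + 2 := by
  induction fuel with
  | zero => intro top _ h; exact absurd h (by simp [cov])
  | succ n ih =>
    intro top htop hcov k hbk hkt hc
    have e : cov l r bot (n + 1) top = force (dpO l r top) fun v =>
      cond (Nat.ble v top) (cond (Nat.ble v bot) true (cov l r bot n (Nat.sub v 1))) false := rfl
    rw [e, force_eq] at hcov
    rcases h1 : Nat.ble (dpO l r top) top with _ | _
    · simp [h1] at hcov
    rw [h1, cond_true] at hcov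
    rw [Nat.ble_eq] at h1
    by_cases h2 : dpO l r top ≤ k
    · have := dpO_sound (hc.mono hkt) hh l r hl (by omega)
      omega
    · rcases h3 : Nat.ble (dpO l r top) bot with _ | _
      · rw [h3, cond_false] at hcov
        exact ih _ (by show dpO l r top - 1 < _; omega) hcov k hbk (by show k ≤ dpO l r top - 1; omega) hc
      · rw [Nat.ble_eq] at h3; omega

/-- Cover with the identity order. -/
def covI (h r bot top : ℕ) : Bool := cov (List.range' 1 h) r bot 100 top

lemma covI_sound {h r bot top : ℕ} {U W : ℕ → ℤ} (hcov : covI h r bot top = true) (hh : h ≤ 16383)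
    (ht : top < 1000000) (k : ℕ) (h1 : bot ≤ k) (h2 : k ≤ top) (hc : Chain k h U W) :
    1 + ∑ a ∈ Finset.Icc 1 h, cnt a (U a) (W a) ≤ k + 2 :=
  cov_sound hh _ r bot (List.Perm.refl _) 100 top ht hcov k h1 h2 hc


/-! ### Evaluation for heights between 4 and 51 -/

/-- Meeting point and largest `k` treated with tables, for the heights `4, …, 51`. -/
def rtTab : List (ℕ × ℕ) := [
(0, 384), (4, 594), (0, 384), (0, 384), (0, 384), (0, 384), (0, 384), (8, 429), (0, 384), (9, 
529), (10, 525), (10, 521), (11, 482), (12, 612), (12, 584), (13, 729), (14, 734), (15, 752), 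
(15, 734), (16, 857), (17, 842), (18, 899), (18, 915), (19, 943), (19, 935), (21, 1054), (21, 
1047), (22, 1154), (23, 1182), (23, 1239), (24, 1251), (25, 1305), (25, 1278), (26, 1365), 
(27, 1395), (28, 1445), (28, 1434), (29, 1536), (29, 1544), (30, 1651), (31, 1684), (31, 
1706), (32, 1709), (33, 1826), (34, 1824), (35, 1904), (35, 1916), (36, 1959)]

def rt (h : ℕ) : ℕ × ℕ := rtTab.getD (h - 4) (0, 0)
def kbot (h : ℕ) : ℕ := max 385 ((3 * h ^ 2 + 3) / 4)

def rtOk (h : ℕ) : Bool :=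
  Nat.beq h 23 || Nat.beq h 25 || (Nat.blt (rt h).2 (kbot h) || covI h (rt h).1 (kbot h) (rt h).2)
    && Nat.ble (rt h).2 2000

def ord23a : List ℕ := [2, 3, 6, 1, 9, 4, 7, 5, 11, 8, 10, 12, 13, 16, 15, 14, 19, 18, 17, 20, 21, 22, 23]
def ord23b : List ℕ := [11, 8, 10, 9, 7, 4, 3, 5, 2, 1, 13, 6, 12, 16, 20, 18, 17, 14, 15, 19, 23, 22, 21]
def ord25a : List ℕ := [5, 6, 9, 3, 2, 4, 1, 7, 8, 12, 10, 11, 15, 18, 14, 13, 16, 19, 17, 21, 24, 20,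
  22, 23, 25]
def ord25b : List ℕ := [8, 2, 1, 4, 5, 7, 3, 11, 14, 12, 15, 10, 6, 9, 13, 17, 18, 16, 19, 21, 22, 23,
  20, 24, 25]

set_option maxRecDepth 100000 in
lemma rt_ok1 : (List.range' 4 20).all rtOk = true := by decide +kernel
set_option maxRecDepth 100000 in
lemma rt_ok2 : (List.range' 24 28).all rtOk = true := by decide +kernel
set_option maxRecDepth 100000 in
lemma rt_ok23 : (covI 23 16 446 857 && cov ord23a 16 440 100 445 && covI 23 16 437 439 &&
  cov ord23b 16 397 100 436) = true := by decide +kernel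
set_option maxRecDepth 100000 in
lemma rt_ok25 : (covI 25 18 492 899 && cov ord25a 18 478 100 491 && cov ord25b 18 469 100 477) = true := by
  decide +kernel

lemma dp_range {k h : ℕ} {U W : ℕ → ℤ} (hc : Chain k h U W) (h4 : 4 ≤ h) (h51 : h ≤ 51)
    (hk : 385 ≤ k) (hk2 : 3 * h ^ 2 ≤ 4 * k) (htop : k ≤ (rt h).2) :
    1 + ∑ a ∈ Finset.Icc 1 h, cnt a (U a) (W a) ≤ k + 2 := by
  by_cases e23 : h = 23
  · subst e23
    have ht : (rt 23).2 = 857 := by decide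
    rw [ht] at htop
    have := rt_ok23
    simp only [Bool.and_eq_true] at this
    obtain ⟨⟨⟨c1, c2⟩, c3⟩, c4⟩ := this
    rcases le_or_gt 446 k with q1 | q1
    · exact covI_sound c1 (by norm_num) (by norm_num) k q1 htop hc
    rcases le_or_gt 440 k with q2 | q2
    · exact cov_sound (by norm_num) _ _ _ (by decide) _ _ (by norm_num) c2 k q2 (by omega) hc
    rcases le_or_gt 437 k with q3 | q3
    · exact covI_sound c3 (by norm_num) (by norm_num) k q3 (by omega) hc
    exact cov_sound (by norm_num) _ _ _ (by decide) _ _ (by norm_num) c4 k (by omega) (by omega) hc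
  by_cases e25 : h = 25
  · subst e25
    have ht : (rt 25).2 = 899 := by decide
    rw [ht] at htop
    have := rt_ok25
    simp only [Bool.and_eq_true] at this
    obtain ⟨⟨c1, c2⟩, c3⟩ := this
    rcases le_or_gt 492 k with q1 | q1
    · exact covI_sound c1 (by norm_num) (by norm_num) k q1 htop hc
    rcases le_or_gt 478 k with q2 | q2
    · exact cov_sound (by norm_num) _ _ _ (by decide) _ _ (by norm_num) c2 k q2 (by omega) hc
    exact cov_sound (by norm_num) _ _ _ (by decide) _ _ (by norm_num) c3 k (by omega) (by omega) hc
  have hok : rtOk h = true := by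
    rcases lt_or_ge h 24 with q | q
    · exact List.all_eq_true.mp rt_ok1 h (by rw [List.mem_range'_1]; omega)
    · exact List.all_eq_true.mp rt_ok2 h (by rw [List.mem_range'_1]; omega)
  have b23 : Nat.beq h 23 = false := by
    rw [Bool.eq_false_iff]; intro hb; exact e23 (Nat.eq_of_beq_eq_true hb)
  have b25 : Nat.beq h 25 = false := by
    rw [Bool.eq_false_iff]; intro hb; exact e25 (Nat.eq_of_beq_eq_true hb)
  unfold rtOk at hok
  rw [b23, b25, Bool.false_or, Bool.false_or, Bool.and_eq_true, Bool.or_eq_true] at hok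
  obtain ⟨hok, hle⟩ := hok
  have hbot : kbot h ≤ k := by unfold kbot; omega
  rcases hok with q | q
  · have : (rt h).2 < kbot h := Nat.le_of_ble_eq_true q
    omega
  · rw [Nat.ble_eq] at hle
    exact covI_sound q (by omega) (by omega) k hbot htop hc


/-! ### Linear bounds for single levels -/

lemma fresh_s (c : ℕ) (hc : 1 ≤ c) (hc' : c ≤ 16383) :
    (fresh c).s = phi c ∧ ∀ i < c, dg (ctab c) i = Cc c i := by
  have hT : (fresh c).T = pk (Cc c) c := ctab_eq c hc'
  have hlt : ∀ i < c, Cc c i < 16384 := fun i hi => by have := Cc_le c i; omega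
  have hd : ∀ i < c, dg (fresh c).T i = Cc c i := by
    rw [hT]; exact dg_pk _ _ hlt
  refine ⟨?_, hd⟩
  show cond (Nat.beq c 1) 1 (dg (fresh c).T (c - 1)) = _
  unfold phi
  by_cases h1 : c = 1
  · subst h1; simp [Cc]
  · have : Nat.beq c 1 = false := by
      rw [Bool.eq_false_iff]; intro hb; exact h1 (Nat.eq_of_beq_eq_true hb)
    rw [this, if_neg h1, hd _ (by omega)]; rfl

/-- One prime factor of the weight. -/
def wp (p a : ℕ) : ℕ := cond (Nat.beq (Nat.mod a p) 0) (Nat.sub p 1) p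
/-- The weight `2310 * φ(g) / g` with `g = gcd a 2310`. -/
def wf (a : ℕ) : ℕ :=
  Nat.mul (Nat.mul (Nat.mul (wp 2 a) (wp 3 a)) (Nat.mul (wp 5 a) (wp 7 a))) (wp 11 a)

lemma wp_mod (p a : ℕ) (hp : p ∣ 2310) : wp p (a % 2310) = wp p a := by
  unfold wp
  have : Nat.mod (a % 2310) p = Nat.mod a p := Nat.mod_mod_of_dvd a hp
  rw [this]

lemma wf_mod (a : ℕ) : wf (a % 2310) = wf a := by
  unfold wf
  rw [wp_mod 2 a (by norm_num), wp_mod 3 a (by norm_num), wp_mod 5 a (by norm_num),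
    wp_mod 7 a (by norm_num), wp_mod 11 a (by norm_num)]

def wfOk (r : ℕ) : Bool :=
  Nat.beq (Nat.mul 2310 (fresh (Nat.gcd r 2310)).s) (Nat.mul (wf r) (Nat.gcd r 2310))

/-- Check a predicate on `0, …, n-1`. -/
def allB (f : ℕ → Bool) (n : ℕ) : Bool := Nat.rec true (fun i ih => and (f i) ih) n

lemma allB_spec (f : ℕ → Bool) (n : ℕ) (h : allB f n = true) : ∀ i < n, f i = true := by
  induction n with
  | zero => intro i hi; omega
  | succ n ih =>
    have h' : (f n && allB f n) = true := h
    rw [Bool.and_eq_true] at h'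
    intro i hi
    rcases Nat.lt_succ_iff_lt_or_eq.mp hi with q | q
    · exact ih h'.2 i q
    · subst q; exact h'.1

set_option maxRecDepth 100000 in
lemma wf_ok : allB wfOk 2310 = true := by decide +kernel

lemma wf_spec (a : ℕ) : 2310 * phi (Nat.gcd a 2310) = wf a * Nat.gcd a 2310 := by
  have h := allB_spec _ _ wf_ok (a % 2310) (Nat.mod_lt _ (by norm_num))
  have h' := Nat.eq_of_beq_eq_true h
  have e : Nat.gcd (a % 2310) 2310 = Nat.gcd a 2310 := by
    rw [← Nat.gcd_rec, Nat.gcd_comm]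
  have hpos : 1 ≤ Nat.gcd a 2310 := Nat.gcd_pos_of_pos_right _ (by norm_num)
  have hle : Nat.gcd a 2310 ≤ 2310 := Nat.gcd_le_right _ (by norm_num)
  rw [wf_mod, e, (fresh_s _ hpos (by omega)).1] at h'
  exact h'

def emx (g : ℕ) : ℕ :=
  mxf (fun r => Nat.sub (Nat.mul g (dg (ctab g) r)) (Nat.mul (fresh g).s r)) g

def Ebar (g : ℕ) : ℕ :=
  Nat.add (Nat.div (Nat.add (Nat.mul 4620 (emx g)) (Nat.sub g 1)) g) (cond (Nat.beq g 1) 2310 0)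

lemma cnt_lin (g : ℕ) (hg : 1 ≤ g) (hg' : g ≤ 16383) (U W : ℤ) (h : -1 ≤ U + W) :
    2310 * ((g : ℤ) * cnt g U W) ≤ 2310 * (phi g * (U + W)) + g * Ebar g := by
  obtain ⟨f1, f2⟩ := fresh_s g hg hg'
  have he : ∀ r < g, g * Cc g r ≤ phi g * r + emx g := by
    intro r hr
    have : g * Cc g r - phi g * r ≤ emx g := by
      have := le_mxf (fun r => Nat.sub (Nat.mul g (dg (ctab g) r)) (Nat.mul (fresh g).s r)) g r hr
      rw [← f2 r hr, ← f1]
      exact this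
    omega
  have h1 := Fv_lin g (emx g) hg he U
  have h2 := Fv_lin g (emx g) hg he W
  have h3 := cnt_eq g hg U W h
  have hE : 4620 * emx g + (if g = 1 then 2310 * g else 0) ≤ g * Ebar g := by
    show _ ≤ g * ((4620 * emx g + (g - 1)) / g + cond (Nat.beq g 1) 2310 0)
    have hd := Nat.div_add_mod (4620 * emx g + (g - 1)) g
    have hm := Nat.mod_lt (4620 * emx g + (g - 1)) hg
    rw [mul_add]
    split_ifs with h1
    · subst h1; simp
    · have : Nat.beq g 1 = false := by
        rw [Bool.eq_false_iff]; intro hb; exact h1 (Nat.eq_of_beq_eq_true hb)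
      rw [this]; simp only [cond_false]; omega
  have hE' : (4620 : ℤ) * emx g + (if g = 1 then 2310 * (g : ℤ) else 0) ≤ g * Ebar g := by
    have := (Int.ofNat_le.mpr hE)
    push_cast at this
    exact this
  rw [h3]
  split_ifs at hE' ⊢ with hg1 <;> nlinarith

/-- The divisor used for the level `a`. -/
def gl (a : ℕ) : ℕ := cond (Nat.ble a 130) a (Nat.gcd a 2310)
/-- The slope of the level `a`, in units of `1 / 2310`. -/
def sig (a : ℕ) : ℕ := cond (Nat.ble a 130) (Nat.mul 2310 (phi a)) (Nat.mul (wf a) a)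

lemma gl_spec (a : ℕ) (ha : 1 ≤ a) : 1 ≤ gl a ∧ gl a ≤ 16383 ∧ gl a ∣ a ∧
    sig a * gl a = 2310 * phi (gl a) * a := by
  unfold gl sig
  rcases h : Nat.ble a 130 with _ | _
  · simp only [cond_false]
    refine ⟨Nat.gcd_pos_of_pos_right _ (by norm_num), ?_, Nat.gcd_dvd_left _ _, ?_⟩
    · exact (Nat.gcd_le_right _ (by norm_num)).trans (by norm_num)
    · rw [wf_spec]
      show wf a * a * _ = _
      ring
  · rw [Nat.ble_eq] at h
    simp only [cond_true]
    refine ⟨ha, by omega, dvd_rfl, rfl⟩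

lemma level_bound (a : ℕ) (ha : 1 ≤ a) (U W : ℤ) (h : -1 ≤ U + W) :
    2310 * ((a : ℤ) * cnt a U W) ≤ sig a * (U + W) + a * Ebar (gl a) := by
  obtain ⟨h1, h2, h3, h4⟩ := gl_spec a ha
  have e1 := cnt_lin (gl a) h1 h2 U W h
  have e2 : (cnt a U W : ℤ) ≤ cnt (gl a) U W := by exact_mod_cast cnt_mono h3 U W
  have hgz : (0 : ℤ) < gl a := by exact_mod_cast h1
  have haz : (0 : ℤ) < a := by exact_mod_cast ha
  have e4 : (sig a : ℤ) * gl a = 2310 * phi (gl a) * a := by exact_mod_cast h4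
  have e5 : (gl a : ℤ) * (2310 * (a * cnt a U W)) ≤ gl a * (sig a * (U + W) + a * Ebar (gl a)) := by
    have := mul_le_mul_of_nonneg_left e1 haz.le
    have e6 : (gl a : ℤ) * (sig a * (U + W)) = 2310 * phi (gl a) * a * (U + W) := by
      rw [← e4]; ring
    have e7 : (gl a : ℤ) * (2310 * (a * cnt a U W)) ≤ gl a * (2310 * (a * cnt (gl a) U W)) := by
      gcongr
    rw [mul_add, e6]
    linarith
  exact le_of_mul_le_mul_left e5 hgz


/-! ### The staircase bound -/

/-- Non-negative lengths, extended by zero beyond the height. -/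
def xv (h : ℕ) (U W : ℕ → ℤ) (a : ℕ) : ℤ := if a ≤ h then max (U a + W a) 0 else 0

lemma xv_nonneg (h : ℕ) (U W : ℕ → ℤ) (a : ℕ) : 0 ≤ xv h U W a := by
  unfold xv; split_ifs
  · exact le_max_right _ _
  · exact le_rfl

lemma xv_top {k h : ℕ} {U W : ℕ → ℤ} (hc : Chain k h U W) (b : ℕ) (hb : 1 ≤ b) (hbh : b ≤ h) :
    (h : ℤ) * xv h U W b ≤ 2 * k := by
  have p1 := hc.pair h b hc.pos le_rfl hb hbh
  have p2 := hc.pair b h hb hbh hc.pos le_rfl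
  have ht := hc.top
  have hb0 : (0 : ℤ) ≤ b := by positivity
  unfold xv
  rw [if_pos hbh]
  rcases max_choice (U b + W b) 0 with q | q <;> rw [q]
  · nlinarith
  · simp

lemma xv_pair {k h : ℕ} {U W : ℕ → ℤ} (hc : Chain k h U W) (a b : ℕ) (ha : 1 ≤ a) (hah : a ≤ h)
    (hb : 1 ≤ b) (hbh : b ≤ h) : (b : ℤ) * xv h U W a + a * xv h U W b ≤ 2 * k := by
  have p1 := hc.pair a b ha hah hb hbh
  have p2 := hc.pair b a hb hbh ha hah
  have t1 := xv_top hc a ha hah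
  have t2 := xv_top hc b hb hbh
  have n1 := xv_nonneg h U W a
  have n2 := xv_nonneg h U W b
  have ha' : (a : ℤ) ≤ h := by exact_mod_cast hah
  have hb' : (b : ℤ) ≤ h := by exact_mod_cast hbh
  have e1 : (b : ℤ) * xv h U W a ≤ h * xv h U W a := by gcongr
  have e2 : (a : ℤ) * xv h U W b ≤ h * xv h U W b := by gcongr
  have c1 : xv h U W a = U a + W a ∨ xv h U W a = 0 := by
    unfold xv; rw [if_pos hah]; exact max_choice _ _
  have c2 : xv h U W b = U b + W b ∨ xv h U W b = 0 := by
    unfold xv; rw [if_pos hbh]; exact max_choice _ _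
  rcases c1 with c1 | c1
  · rcases c2 with c2 | c2
    · rw [c1, c2, mul_add, mul_add]; linarith
    · have : (a : ℤ) * xv h U W b = 0 := by rw [c2, mul_zero]
      linarith
  · have : (b : ℤ) * xv h U W a = 0 := by rw [c1, mul_zero]
    linarith

lemma xv_ext {k h n : ℕ} {U W : ℕ → ℤ} (hc : Chain k h U W) (hn : h ≤ n) (a b : ℕ) (ha : 1 ≤ a)
    (han : a ≤ n) (hb : 1 ≤ b) (hbn : b ≤ n) :
    (h : ℤ) * (b * xv h U W a + a * xv h U W b) ≤ 2 * k * n := by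
  have hnz : (h : ℤ) ≤ n := by exact_mod_cast hn
  have hk0 : (0 : ℤ) ≤ k := by positivity
  have zero : ∀ c, ¬ c ≤ h → xv h U W c = 0 := fun c hc => by unfold xv; rw [if_neg hc]
  have one : ∀ a b : ℕ, a ≤ n → 1 ≤ b → b ≤ h → (h : ℤ) * (a * xv h U W b) ≤ 2 * k * n := by
    intro a b han hb hbh
    have t := xv_top hc b hb hbh
    have haz : (a : ℤ) ≤ n := by exact_mod_cast han
    have n2 := xv_nonneg h U W b
    calc (h : ℤ) * (a * xv h U W b) = a * (h * xv h U W b) := by ring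
      _ ≤ n * (2 * k) := by gcongr
      _ = _ := by ring
  by_cases hah : a ≤ h
  · by_cases hbh : b ≤ h
    · have := xv_pair hc a b ha hah hb hbh
      calc (h : ℤ) * (b * xv h U W a + a * xv h U W b) ≤ h * (2 * k) := by gcongr
        _ ≤ n * (2 * k) := by gcongr
        _ = _ := by ring
    · rw [zero b hbh, mul_zero, add_zero]
      exact one b a hbn ha hah
  · rw [zero a hah, mul_zero, zero_add]
    by_cases hbh : b ≤ h
    · exact one a b han hb hbh
    · rw [zero b hbh]; simp; positivity

/-- Evaluate the argument before continuing. -/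
def forceN (v : ℕ) (f : ℕ → ℕ) : ℕ := Nat.rec (f 0) (fun n _ => f (Nat.succ n)) v

lemma forceN_eq (v : ℕ) (f : ℕ → ℕ) : forceN v f = f v := by
  cases v <;> rfl

/-- One term of the staircase sum, rounded up. -/
def stt (s a b : ℕ) : ℕ := Nat.add (Nat.div (Nat.mul s 1000000) (Nat.mul a b)) 1

/-- The staircase sum for the levels `a, …, a + m`. -/
def stairG (t : ℕ → ℕ → ℕ → ℕ) (s : ℕ → ℕ) (m : ℕ) : ℕ → ℕ → ℕ → ℕ → ℕ :=
  Nat.rec (fun a sa _ acc => Nat.add acc (t sa a a))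
    (fun m' ih a sa sb acc => cond (Nat.ble sa sb)
      (forceN (Nat.add acc (t (Nat.mul 2 sa) a (Nat.add a (Nat.succ m')))) fun acc' =>
        forceN (Nat.sub sb sa) fun sb' => forceN (Nat.succ a) fun a' =>
        forceN (cond (Nat.beq m' 0) sb' (s a')) fun sa' => ih a' sa' sb' acc')
      (forceN (Nat.add acc (t (Nat.mul 2 sb) a (Nat.add a (Nat.succ m')))) fun acc' =>
        forceN (Nat.sub sa sb) fun sa' => forceN (s (Nat.add a m')) fun sb' =>
        ih a sa' sb' acc')) m

lemma stairG_zero (t : ℕ → ℕ → ℕ → ℕ) (s : ℕ → ℕ) (a sa sb acc : ℕ) :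
    stairG t s 0 a sa sb acc = acc + t sa a a := rfl

lemma stairG_succ (t : ℕ → ℕ → ℕ → ℕ) (s : ℕ → ℕ) (m a sa sb acc : ℕ) :
    stairG t s (m + 1) a sa sb acc =
    if sa ≤ sb then stairG t s m (a + 1) (if m = 0 then sb - sa else s (a + 1)) (sb - sa)
      (acc + t (2 * sa) a (a + (m + 1)))
    else stairG t s m a (sa - sb) (s (a + m)) (acc + t (2 * sb) a (a + (m + 1))) := by
  have e : stairG t s (m + 1) a sa sb acc = cond (Nat.ble sa sb)
      (forceN (Nat.add acc (t (Nat.mul 2 sa) a (Nat.add a (Nat.succ m)))) fun acc' =>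
        forceN (Nat.sub sb sa) fun sb' => forceN (Nat.succ a) fun a' =>
        forceN (cond (Nat.beq m 0) sb' (s a')) fun sa' => stairG t s m a' sa' sb' acc')
      (forceN (Nat.add acc (t (Nat.mul 2 sb) a (Nat.add a (Nat.succ m)))) fun acc' =>
        forceN (Nat.sub sa sb) fun sa' => forceN (s (Nat.add a m)) fun sb' =>
        stairG t s m a sa' sb' acc') := rfl
  rw [e]
  simp only [forceN_eq]
  rcases h : Nat.ble sa sb with _ | _
  · have : ¬ sa ≤ sb := by rw [← Nat.ble_eq]; simp [h]
    rw [if_neg this]; rfl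
  · rw [Nat.ble_eq] at h
    rw [if_pos h]
    cases m <;> rfl

/-- The staircase sum with the terms `stt`. -/
def stair (s : ℕ → ℕ) (m a sa sb acc : ℕ) : ℕ := stairG stt s m a sa sb acc

lemma stair_zero (s : ℕ → ℕ) (a sa sb acc : ℕ) : stair s 0 a sa sb acc = acc + stt sa a a := by
  unfold stair; exact stairG_zero _ _ _ _ _ _

lemma stair_succ (s : ℕ → ℕ) (m a sa sb acc : ℕ) : stair s (m + 1) a sa sb acc =
    if sa ≤ sb then stair s m (a + 1) (if m = 0 then sb - sa else s (a + 1)) (sb - sa)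
      (acc + stt (2 * sa) a (a + (m + 1)))
    else stair s m a (sa - sb) (s (a + m)) (acc + stt (2 * sb) a (a + (m + 1))) := by
  unfold stair; exact stairG_succ _ _ _ _ _ _ _

lemma stt_eq (s a b : ℕ) : stt s a b = s * 1000000 / (a * b) + 1 := rfl

lemma stt_le (s a b : ℕ) (ha : 1 ≤ a) (hb : 1 ≤ b) (K : ℚ) (hK : 0 ≤ K) :
    (s : ℚ) * (K / (a * b)) ≤ stt s a b * K / 1000000 := by
  have haz : (0 : ℚ) < a := by exact_mod_cast ha
  have hbz : (0 : ℚ) < b := by exact_mod_cast hb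
  have h1 : s * 1000000 < (stt s a b) * (a * b) := by
    rw [stt_eq]
    rw [mul_comm _ (a * b)]
    exact Nat.lt_mul_div_succ _ (by positivity)
  have h2 : (s : ℚ) * 1000000 ≤ (stt s a b) * (a * b) := by exact_mod_cast h1.le
  have h3 : (s : ℚ) / (a * b) ≤ stt s a b / 1000000 := by
    rw [div_le_div_iff₀ (by positivity) (by norm_num)]; exact h2
  calc (s : ℚ) * (K / (a * b)) = s / (a * b) * K := by ring
    _ ≤ stt s a b / 1000000 * K := by gcongr
    _ = _ := by ring

lemma stair_sound (s : ℕ → ℕ) (n : ℕ) (y : ℕ → ℚ) (K : ℚ) (hK : 0 ≤ K)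
    (hy : ∀ a b : ℕ, 1 ≤ a → a ≤ n → 1 ≤ b → b ≤ n → y a + y b ≤ 2 * (K / (a * b))) (m : ℕ) :
    ∀ a sa sb acc : ℕ, 1 ≤ a → a + m ≤ n →
    sa * y a + (if m = 0 then 0 else sb * y (a + m)) + ∑ i ∈ Finset.Ioo a (a + m), s i * y i
      + acc * K / 1000000 ≤ stair s m a sa sb acc * K / 1000000 := by
  induction m with
  | zero =>
    intro a sa sb acc ha han
    rw [stair_zero]
    have h1 := hy a a ha (by omega) ha (by omega)
    have h2 := stt_le sa a a ha ha K hK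
    have h3 : (sa : ℚ) * y a ≤ sa * (K / (a * a)) := by gcongr; linarith
    simp
    rw [add_mul, add_div]
    linarith
  | succ m ih =>
    intro a sa sb acc ha han
    have h1 := hy a (a + (m + 1)) ha (by omega) (by omega) han
    push_cast at h1
    rw [stair_succ, if_neg (Nat.succ_ne_zero m)]
    by_cases hs : sa ≤ sb
    · rw [if_pos hs]
      have h2 := stt_le (2 * sa) a (a + (m + 1)) ha (by omega) K hK
      push_cast at h2
      have h3 := ih (a + 1) (if m = 0 then sb - sa else s (a + 1)) (sb - sa)
        (acc + stt (2 * sa) a (a + (m + 1))) (by omega) (by omega)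
      refine le_trans ?_ h3
      push_cast
      rw [add_mul, add_div]
      have h4 : (sa : ℚ) * (y a + y (a + (m + 1))) ≤ sa * (2 * (K / (a * (a + (m + 1))))) := by gcongr
      rcases Nat.eq_zero_or_pos m with hm | hm
      · subst hm
        rw [if_pos rfl, if_pos rfl, Nat.cast_sub hs]
        have : Finset.Ioo a (a + (0 + 1)) = ∅ := by ext; simp
        rw [this]
        simp at *
        linarith
      · rw [if_neg (by omega), if_neg (by omega), Nat.cast_sub hs]
        have e : Finset.Ioo a (a + (m + 1)) = insert (a + 1) (Finset.Ioo (a + 1) (a + 1 + m)) := by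
          ext i; simp; omega
        rw [e, Finset.sum_insert (by simp)]
        have : a + 1 + m = a + (m + 1) := by omega
        rw [this]
        linarith
    · rw [if_neg hs]
      have h2 := stt_le (2 * sb) a (a + (m + 1)) ha (by omega) K hK
      push_cast at h2
      have h3 := ih a (sa - sb) (s (a + m)) (acc + stt (2 * sb) a (a + (m + 1))) (by omega) (by omega)
      refine le_trans ?_ h3
      push_cast
      rw [add_mul, add_div, Nat.cast_sub (by omega)]
      have h4 : (sb : ℚ) * (y a + y (a + (m + 1))) ≤ sb * (2 * (K / (a * (a + (m + 1))))) := by gcongr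
      rcases Nat.eq_zero_or_pos m with hm | hm
      · subst hm
        rw [if_pos rfl]
        have : Finset.Ioo a (a + (0 + 1)) = ∅ := by ext; simp
        rw [this]
        simp at *
        linarith
      · rw [if_neg (by omega)]
        have e : Finset.Ioo a (a + (m + 1)) = insert (a + m) (Finset.Ioo a (a + m)) := by
          ext i; simp; omega
        rw [e, Finset.sum_insert (by simp)]
        linarith

/-- Sum of `Ebar` over the levels `1, …, n`. -/
def Esum (n : ℕ) : ℕ := ∑ a ∈ Finset.Icc 1 n, Ebar (gl a)

lemma cnt_le_xv {k h : ℕ} {U W : ℕ → ℤ} (hc : Chain k h U W) (a : ℕ) (ha : 1 ≤ a) (hah : a ≤ h) :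
    2310 * ((a : ℤ) * cnt a (U a) (W a)) ≤ sig a * xv h U W a + a * Ebar (gl a) := by
  refine (level_bound a ha _ _ (hc.low a ha hah)).trans ?_
  have : U a + W a ≤ xv h U W a := by
    unfold xv; rw [if_pos hah]; exact le_max_left _ _
  have h0 : (0 : ℤ) ≤ sig a := by positivity
  nlinarith

lemma stair_bound {k h n A : ℕ} {U W : ℕ → ℤ} (hc : Chain k h U W) (hn : h ≤ n) (h2 : 2 ≤ n)
    (hA : stair sig (n - 1) 1 (sig 1) (sig n) 0 ≤ A) :
    2310 * (1000000 * (h * ∑ a ∈ Finset.Icc 1 h, cnt a (U a) (W a))) ≤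
      A * (k * n) + 1000000 * (h * Esum n) := by
  set y : ℕ → ℚ := fun a => (xv h U W a : ℚ) / a with hy
  have hpos : (0 : ℚ) < h := by exact_mod_cast hc.pos
  set K : ℚ := k * n / h with hKd
  have hK : 0 ≤ K := by positivity
  have hyp : ∀ a b : ℕ, 1 ≤ a → a ≤ n → 1 ≤ b → b ≤ n → y a + y b ≤ 2 * (K / (a * b)) := by
    intro a b ha han hb hbn
    have haz : (0 : ℚ) < a := by exact_mod_cast ha
    have hbz : (0 : ℚ) < b := by exact_mod_cast hb
    have e := xv_ext hc hn a b ha han hb hbn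
    have e' : (h : ℚ) * (b * xv h U W a + a * xv h U W b) ≤ 2 * k * n := by exact_mod_cast e
    have e1 : y a + y b = (h * (b * xv h U W a + a * xv h U W b)) / (h * (a * b)) := by
      simp only [hy]; field_simp
    have e2 : 2 * (K / (a * b)) = (2 * k * n) / (h * (a * b)) := by
      simp only [hKd]; field_simp
    rw [e1, e2]
    gcongr
  have hs := stair_sound sig n y K hK hyp (n - 1) 1 (sig 1) (sig n) 0 le_rfl (by omega)
  rw [if_neg (by omega), show 1 + (n - 1) = n by omega] at hs
  have hsum : ∑ a ∈ Finset.Icc 1 n, (sig a : ℚ) * y a ≤ A * K / 1000000 := by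
    have e : Finset.Icc 1 n = insert 1 (insert n (Finset.Ioo 1 n)) := by
      ext i; simp; omega
    rw [e, Finset.sum_insert (by simp; omega), Finset.sum_insert (by simp)]
    have : (stair sig (n - 1) 1 (sig 1) (sig n) 0 : ℚ) * K / 1000000 ≤ A * K / 1000000 := by
      gcongr
    simp at hs
    linarith
  have hcnt : ∑ a ∈ Finset.Icc 1 h, (2310 : ℚ) * cnt a (U a) (W a) ≤
      ∑ a ∈ Finset.Icc 1 n, ((sig a : ℚ) * y a + Ebar (gl a)) := by
    calc _ ≤ ∑ a ∈ Finset.Icc 1 h, ((sig a : ℚ) * y a + Ebar (gl a)) := by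
          apply Finset.sum_le_sum
          intro a ha
          rw [Finset.mem_Icc] at ha
          have haz : (0 : ℚ) < a := by exact_mod_cast ha.1
          have e := cnt_le_xv hc a ha.1 ha.2
          have e' : 2310 * ((a : ℚ) * cnt a (U a) (W a)) ≤ sig a * xv h U W a + a * Ebar (gl a) := by
            exact_mod_cast e
          have e2 : (sig a : ℚ) * y a + Ebar (gl a) = (sig a * xv h U W a + a * Ebar (gl a)) / a := by
            simp only [hy]; field_simp
          rw [e2, le_div_iff₀ haz]
          linarith
      _ ≤ _ := by
          apply Finset.sum_le_sum_of_subset_of_nonneg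
          · intro a ha; rw [Finset.mem_Icc] at *; omega
          · intro a _ _
            have : (0 : ℚ) ≤ xv h U W a := by exact_mod_cast xv_nonneg h U W a
            simp only [hy]
            positivity
  rw [Finset.sum_add_distrib, ← Finset.mul_sum] at hcnt
  have hE : (Esum n : ℚ) = ∑ a ∈ Finset.Icc 1 n, (Ebar (gl a) : ℚ) := by
    unfold Esum; push_cast; rfl
  rw [← hE] at hcnt
  have fin : (2310 : ℚ) * (1000000 * (h * ∑ a ∈ Finset.Icc 1 h, (cnt a (U a) (W a) : ℚ))) ≤
      A * (k * n) + 1000000 * (h * Esum n) := by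
    have e : (A : ℚ) * (k * n) = h * 1000000 * (A * K / 1000000) := by
      simp only [hKd]; field_simp
    rw [e]
    have := mul_le_mul_of_nonneg_left (hcnt.trans (add_le_add_left hsum _)) (by positivity : (0 : ℚ) ≤ h * 1000000)
    linarith
  exact_mod_cast fin

/-- The final numerical test: `A` and `E` bound the staircase sum and the error terms. -/
def tmplOk (A E h1 n k0 : ℕ) : Bool :=
  Nat.ble (A * n) (2310000000 * h1) &&
    Nat.ble (1000000 * h1 * E) (k0 * (2310000000 * h1 - A * n) + 2310000000 * h1)

lemma tmpl_sound {k h n A E h1 k0 : ℕ} {U W : ℕ → ℤ} (hc : Chain k h U W) (h1h : h1 ≤ h) (hn : h ≤ n)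
    (h2 : 2 ≤ n) (hp : 1 ≤ h1) (hk : k0 ≤ k)
    (hA : stair sig (n - 1) 1 (sig 1) (sig n) 0 ≤ A) (hE : Esum n ≤ E)
    (hok : tmplOk A E h1 n k0 = true) :
    1 + ∑ a ∈ Finset.Icc 1 h, cnt a (U a) (W a) ≤ k + 2 := by
  unfold tmplOk at hok
  rw [Bool.and_eq_true, Nat.ble_eq, Nat.ble_eq] at hok
  obtain ⟨o1, o2⟩ := hok
  have hb := stair_bound hc hn h2 hA
  set N := ∑ a ∈ Finset.Icc 1 h, cnt a (U a) (W a) with hN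
  have o3 : 1000000 * h1 * E ≤ k * (2310000000 * h1 - A * n) + 2310000000 * h1 :=
    o2.trans (by gcongr)
  obtain ⟨d, hd⟩ := Nat.exists_eq_add_of_le o1
  rw [hd, Nat.add_sub_cancel_left] at o3
  -- o3 : 10^6 h1 E ≤ k d + 2310·10^6 h1, hd : 2310·10^6 h1 = A n + d
  by_contra hcon
  have hN2 : k + 2 ≤ N := by omega
  have p1 : 2310 * (1000000 * (h * (k + 2))) ≤ A * (k * n) + 1000000 * (h * E) := by
    calc _ ≤ 2310 * (1000000 * (h * N)) := by gcongr
      _ ≤ _ := hb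
      _ ≤ _ := by gcongr
  have p2 := Nat.mul_le_mul_left h1 p1
  have p3 := Nat.mul_le_mul_left h o3
  have p4 : h1 * (A * (k * n)) ≤ h * (A * (k * n)) := by gcongr
  have p5 : h1 * (2310 * (1000000 * (h * (k + 2)))) = (A * n + d) * (h * (k + 2)) := by
    rw [← hd]; ring
  have p6 : (A * n + d) * (h * (k + 2)) = h * (A * (k * n)) + h * (k * d) + 2 * (h * (A * n + d)) := by
    ring
  have p7 : h1 * (A * (k * n) + 1000000 * (h * E)) = h1 * (A * (k * n)) + h * (1000000 * h1 * E) := by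
    ring
  have p8 : h * (k * d + (A * n + d)) = h * (k * d) + h * (A * n + d) := by ring
  have p9 : 0 < h * (A * n + d) := by
    rw [← hd]
    have := hc.pos
    positivity
  omega


/-! ### Evaluation of the staircase bounds -/

/-- The packed totients of `0, …, 130`. -/
def phiTab : ℕ := pk (fun a => (fresh a).s) 131

/-- Evaluation of `sig` from the packed table. -/
def sigT (PT a : ℕ) : ℕ := cond (Nat.ble a 130) (Nat.mul 2310 (dg PT a)) (Nat.mul (wf a) a)

lemma sigT_eq : sigT phiTab = sig := by
  funext a
  unfold sigT sig
  rcases h : Nat.ble a 130 with _ | _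
  · simp only [cond_false]
  · rw [Nat.ble_eq] at h
    simp only [cond_true]
    have key : ∀ i < 131, (fresh i).s = phi i := by
      intro i hi
      rcases Nat.eq_zero_or_pos i with q | q
      · subst q; decide
      · exact (fresh_s i q (by omega)).1
    have hlt : ∀ i < 131, (fresh i).s < 16384 := by
      intro i hi
      rw [key i hi]
      unfold phi
      split_ifs
      · have := Cc_le i (i - 1)
        omega
      · have := Cc_le i (i - 1)
        omega
    have : dg phiTab a = (fresh a).s := dg_pk (fun a => (fresh a).s) 131 hlt a (by omega)
    rw [this, key a (by omega)]

/-- Evaluation of `Ebar`. -/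
def EbarT (g : ℕ) : ℕ :=
  forceN (ctab g) fun T => forceN (cond (Nat.beq g 1) 1 (dg T (Nat.sub g 1))) fun s =>
  forceN (mxf (fun r => Nat.sub (Nat.mul g (dg T r)) (Nat.mul s r)) g) fun e =>
  Nat.add (Nat.div (Nat.add (Nat.mul 4620 e) (Nat.sub g 1)) g) (cond (Nat.beq g 1) 2310 0)

lemma EbarT_eq (g : ℕ) : EbarT g = Ebar g := by
  unfold EbarT
  simp only [forceN_eq]
  unfold Ebar emx fresh
  rfl

/-- Add the errors of the levels `a, …, a + m - 1`. -/
def sumE (m : ℕ) : ℕ → ℕ → ℕ :=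
  Nat.rec (fun _ E => E) (fun _ ih a E => forceN (Nat.add E (EbarT (gl a))) fun E' =>
    forceN (Nat.succ a) fun a' => ih a' E') m

lemma sumE_succ (m a E : ℕ) : sumE (m + 1) a E = sumE m (a + 1) (E + Ebar (gl a)) := by
  have e : sumE (m + 1) a E = forceN (Nat.add E (EbarT (gl a))) fun E' =>
    forceN (Nat.succ a) fun a' => sumE m a' E' := rfl
  rw [e]
  simp only [forceN_eq, EbarT_eq]
  rfl

lemma sumE_eq (m : ℕ) : ∀ a E : ℕ, sumE m a E = E + ∑ i ∈ Finset.Ico a (a + m), Ebar (gl i) := by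
  induction m with
  | zero => intro a E; simp; rfl
  | succ m ih =>
    intro a E
    rw [sumE_succ, ih, Finset.sum_eq_sum_Ico_succ_bot (by omega : a < a + (m + 1))]
    rw [show a + 1 + m = a + (m + 1) by omega]
    omega

lemma Esum_succ (h1 n : ℕ) (hp : 1 ≤ h1) (hn : h1 ≤ n) :
    Esum n = Esum (h1 - 1) + ∑ i ∈ Finset.Ico h1 (n + 1), Ebar (gl i) := by
  unfold Esum
  have e1 : Finset.Icc 1 n = Finset.Ico 1 (n + 1) := by ext; simp
  have e2 : Finset.Icc 1 (h1 - 1) = Finset.Ico 1 h1 := by ext; simp; omega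
  rw [e1, e2, Finset.sum_Ico_consecutive _ hp (by omega)]

/-- The last height treated together with `h`. -/
def nx (h : ℕ) : ℕ := Nat.add h (cond (Nat.blt h 84) 0 (cond (Nat.blt h 130)
  (Nat.div (Nat.mul h 12) 1000) (cond (Nat.blt h 400) (Nat.div (Nat.mul h 21) 1000)
  (Nat.div (Nat.mul h 23) 1000))))

lemma le_nx (h : ℕ) : h ≤ nx h := Nat.le_add_right _ _

lemma nx_small (h : ℕ) (hh : h < 84) : nx h = h := by
  unfold nx
  have : Nat.blt h 84 = true := by rw [Nat.blt_eq]; exact hh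
  rw [this]; rfl

/-- The smallest `k` treated with the staircase. -/
def k0f (h : ℕ) : ℕ := cond (Nat.ble h 51) (mx (kbot h) (Nat.succ (rt h).2)) (kbot h)

def drv (PT fuel : ℕ) : ℕ → ℕ → ℕ → ℕ → Bool :=
  Nat.rec (fun h1 E h1' E' => and (Nat.beq h1 h1') (Nat.ble E E'))
    (fun _ ih h1 E h1' E' => force (nx h1) fun n =>
      force (sumE (Nat.sub (Nat.succ n) h1) h1 E) fun E2 =>
      force (stair (sigT PT) (Nat.sub n 1) 1 (sigT PT 1) (sigT PT n) 0) fun A =>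
      and (tmplOk A E2 h1 n (k0f h1)) (force (Nat.succ n) fun h2 => ih h2 E2 h1' E')) fuel

def drv0 (fuel h1 E h1' E' : ℕ) : Bool := force phiTab fun PT => drv PT fuel h1 E h1' E'


/-- The bound for the height `h` and all `k` not treated with tables. -/
def Good (h : ℕ) : Prop := ∀ (k : ℕ) (U W : ℕ → ℤ), Chain k h U W → 385 ≤ k → 3 * h ^ 2 ≤ 4 * k →
  (h ≤ 51 → (rt h).2 < k) → 1 + ∑ a ∈ Finset.Icc 1 h, cnt a (U a) (W a) ≤ k + 2

lemma drv_succ (PT f h1 E h1' E' : ℕ) : drv PT (f + 1) h1 E h1' E' =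
    and (tmplOk (stair (sigT PT) (nx h1 - 1) 1 (sigT PT 1) (sigT PT (nx h1)) 0)
      (sumE (nx h1 + 1 - h1) h1 E) h1 (nx h1) (k0f h1))
      (drv PT f (nx h1 + 1) (sumE (nx h1 + 1 - h1) h1 E) h1' E') := by
  have e : drv PT (f + 1) h1 E h1' E' = force (nx h1) fun n =>
      force (sumE (Nat.sub (Nat.succ n) h1) h1 E) fun E2 =>
      force (stair (sigT PT) (Nat.sub n 1) 1 (sigT PT 1) (sigT PT n) 0) fun A =>
      and (tmplOk A E2 h1 n (k0f h1)) (force (Nat.succ n) fun h2 => drv PT f h2 E2 h1' E') := by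
    unfold drv; exact rfl
  rw [e]
  simp only [force_eq]
  exact rfl

lemma le_mx_left' (a b : ℕ) : mx a b = max a b := by
  unfold mx
  rcases h : Nat.ble a b with _ | _
  · have : ¬ a ≤ b := by rw [← Nat.ble_eq]; simp [h]
    simp only [cond_false]; omega
  · rw [Nat.ble_eq] at h
    simp only [cond_true]; omega

lemma drv_sound (f : ℕ) : ∀ h1 E h1' E' : ℕ, 4 ≤ h1 → Esum (h1 - 1) ≤ E →
    drv phiTab f h1 E h1' E' = true → (∀ h, h1 ≤ h → h < h1' → Good h) ∧ Esum (h1' - 1) ≤ E' := by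
  induction f with
  | zero =>
    intro h1 E h1' E' h4 hE hd
    have hd' : (Nat.beq h1 h1' && Nat.ble E E') = true := hd
    rw [Bool.and_eq_true, Nat.ble_eq] at hd'
    have e := Nat.eq_of_beq_eq_true hd'.1
    subst e
    refine ⟨fun h a b => by omega, by omega⟩
  | succ f ih =>
    intro h1 E h1' E' h4 hE hd
    rw [drv_succ, Bool.and_eq_true, sigT_eq] at hd
    obtain ⟨hok, hd⟩ := hd
    have hn := le_nx h1
    set n := nx h1 with hnd
    have hE2 : Esum n ≤ sumE (n + 1 - h1) h1 E := by
      rw [sumE_eq, Esum_succ h1 n (by omega) hn, show h1 + (n + 1 - h1) = n + 1 by omega]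
      omega
    obtain ⟨r1, r2⟩ := ih (n + 1) _ h1' E' (by omega) hE2 hd
    refine ⟨?_, r2⟩
    intro h hh hh'
    rcases Nat.lt_or_ge n h with q | q
    · exact r1 h q hh'
    · intro k U W hc hk hk2 hrt
      have hk0 : k0f h1 ≤ k := by
        have hkb : kbot h1 ≤ k := by
          unfold kbot
          have : h1 ^ 2 ≤ h ^ 2 := Nat.pow_le_pow_left hh 2
          omega
        unfold k0f
        rcases h51 : Nat.ble h1 51 with _ | _
        · exact hkb
        · rw [Nat.ble_eq] at h51
          have e1 := nx_small h1 (by omega)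
          have e2 : h = h1 := by omega
          subst e2
          have := hrt h51
          simp only [cond_true, le_mx_left']
          omega
      exact tmpl_sound hc hh q (by omega) (by omega) hk0 le_rfl hE2 hok

lemma drv0_sound {f h1 E h1' E' : ℕ} (hd : drv0 f h1 E h1' E' = true) (h4 : 4 ≤ h1)
    (hE : Esum (h1 - 1) ≤ E) : (∀ h, h1 ≤ h → h < h1' → Good h) ∧ Esum (h1' - 1) ≤ E' := by
  unfold drv0 at hd
  rw [force_eq] at hd
  exact drv_sound f h1 E h1' E' h4 hE hd

set_option maxRecDepth 100000 in
lemma drv_ok1 : drv0 166 4 7700 554 1991142 = true := by decide +kernel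
set_option maxRecDepth 100000 in
lemma drv_ok2 : drv0 30 554 1991142 1118 3864370 = true := by decide +kernel
set_option maxRecDepth 100000 in
lemma drv_ok3 : drv0 18 1118 3864370 1694 5777774 = true := by decide +kernel
set_option maxRecDepth 100000 in
lemma drv_ok4 : drv0 13 1694 5777774 2281 7732370 = true := by decide +kernel
set_option maxRecDepth 100000 in
lemma drv_ok5 : drv0 10 2281 7732370 2869 9685944 = true := by decide +kernel
set_option maxRecDepth 100000 in
lemma drv_ok6 : drv0 8 2869 9685944 3445 11602836 = true := by decide +kernel
set_option maxRecDepth 100000 in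
lemma drv_ok7 : drv0 7 3445 11602836 4042 13587866 = true := by decide +kernel
set_option maxRecDepth 100000 in
lemma drv_ok8 : drv0 4 4042 13587866 4429 14873708 = true := by decide +kernel

lemma Esum_three : Esum 3 ≤ 7700 := by
  have h := sumE_eq 3 1 0
  have e : sumE 3 1 0 = 7700 := by decide +kernel
  rw [e] at h
  have : Esum 3 = ∑ i ∈ Finset.Ico 1 (1 + 3), Ebar (gl i) := rfl
  omega

lemma good_range (h : ℕ) (h4 : 4 ≤ h) (hh : h < 4429) : Good h := by
  obtain ⟨g1, e1⟩ := drv0_sound drv_ok1 (by norm_num) Esum_three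
  obtain ⟨g2, e2⟩ := drv0_sound drv_ok2 (by norm_num) e1
  obtain ⟨g3, e3⟩ := drv0_sound drv_ok3 (by norm_num) e2
  obtain ⟨g4, e4⟩ := drv0_sound drv_ok4 (by norm_num) e3
  obtain ⟨g5, e5⟩ := drv0_sound drv_ok5 (by norm_num) e4
  obtain ⟨g6, e6⟩ := drv0_sound drv_ok6 (by norm_num) e5
  obtain ⟨g7, e7⟩ := drv0_sound drv_ok7 (by norm_num) e6
  obtain ⟨g8, e8⟩ := drv0_sound drv_ok8 (by norm_num) e7
  rcases Nat.lt_or_ge h 554 with q | q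
  · exact g1 h h4 q
  rcases Nat.lt_or_ge h 1118 with q2 | q2
  · exact g2 h q q2
  rcases Nat.lt_or_ge h 1694 with q3 | q3
  · exact g3 h q2 q3
  rcases Nat.lt_or_ge h 2281 with q4 | q4
  · exact g4 h q3 q4
  rcases Nat.lt_or_ge h 2869 with q5 | q5
  · exact g5 h q4 q5
  rcases Nat.lt_or_ge h 3445 with q6 | q6
  · exact g6 h q5 q6
  rcases Nat.lt_or_ge h 4042 with q7 | q7
  · exact g7 h q6 q7
  · exact g8 h q7 hh


/-! ### Large heights: sums of the periodic weights -/

/-- Sum of the weights up to `A`. -/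
def Dw (A : ℕ) : ℤ := ∑ a ∈ Finset.Ioc 0 A, (wf a : ℤ)
/-- First moment of the weights up to `A`. -/
def Tw (A : ℕ) : ℤ := ∑ a ∈ Finset.Ioc 0 A, (a : ℤ) * wf a

lemma Dw_succ (A : ℕ) : Dw (A + 1) = Dw A + wf (A + 1) := by
  unfold Dw; rw [Finset.sum_Ioc_succ_top (by omega)]
lemma Tw_succ (A : ℕ) : Tw (A + 1) = Tw A + ((A + 1 : ℕ) : ℤ) * wf (A + 1) := by
  unfold Tw; rw [Finset.sum_Ioc_succ_top (by omega)]

/-- The bounds checked for `r < 2310`. -/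
def wchk (r D T : ℕ) : Bool :=
  and (and (Nat.ble (3317760 * r) (2310 * D + 430260)) (Nat.ble (2310 * D) (3317760 * r + 2639220)))
    (and (Nat.ble (248275 * r + 3317760 * (r * r)) (4620 * T))
      (Nat.ble (4620 * T) (7354440 * r + 3317760 * (r * r))))

def wl (m : ℕ) : ℕ → ℕ → ℕ → Bool :=
  Nat.rec (fun _ D T => and (Nat.beq D 3317760) (Nat.beq T 3832567200))
    (fun _ ih r D T => and (wchk r D T) (force (Nat.succ r) fun r' => force (wf r') fun w =>
      force (Nat.add D w) fun D' => force (Nat.add T (Nat.mul r' w)) fun T' => ih r' D' T')) m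

lemma wl_succ (m r D T : ℕ) : wl (m + 1) r D T =
    and (wchk r D T) (wl m (r + 1) (D + wf (r + 1)) (T + (r + 1) * wf (r + 1))) := by
  have e : wl (m + 1) r D T = and (wchk r D T) (force (Nat.succ r) fun r' => force (wf r') fun w =>
      force (Nat.add D w) fun D' => force (Nat.add T (Nat.mul r' w)) fun T' => wl m r' D' T') := by
    unfold wl; exact rfl
  rw [e]
  simp only [force_eq]
  exact rfl

/-- The bounds for the sums up to `A`. -/
def WB (A : ℕ) : Prop :=
  (-430260 ≤ 2310 * Dw A - 3317760 * A ∧ 2310 * Dw A - 3317760 * A ≤ 2639220) ∧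
  (248275 * (A : ℤ) ≤ 4620 * Tw A - 3317760 * A ^ 2 ∧
    4620 * Tw A - 3317760 * (A : ℤ) ^ 2 ≤ 7354440 * A)

lemma wchk_spec {r D T : ℕ} (hD : Dw r = D) (hT : Tw r = T) (h : wchk r D T = true) : WB r := by
  unfold wchk at h
  rw [Bool.and_eq_true, Bool.and_eq_true, Bool.and_eq_true, Nat.ble_eq, Nat.ble_eq, Nat.ble_eq,
    Nat.ble_eq] at h
  obtain ⟨⟨a, b⟩, c, d⟩ := h
  zify at a b c d
  unfold WB
  rw [hD, hT, sq]
  refine ⟨⟨?_, ?_⟩, ?_, ?_⟩ <;> linarith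

lemma wl_sound (m : ℕ) : ∀ r D T : ℕ, Dw r = D → Tw r = T → wl m r D T = true →
    (∀ i < m, WB (r + i)) ∧ Dw (r + m) = 3317760 ∧ Tw (r + m) = 3832567200 := by
  induction m with
  | zero =>
    intro r D T hD hT h
    have h' : (Nat.beq D 3317760 && Nat.beq T 3832567200) = true := h
    rw [Bool.and_eq_true] at h'
    have e1 := Nat.eq_of_beq_eq_true h'.1
    have e2 := Nat.eq_of_beq_eq_true h'.2
    refine ⟨fun i hi => by omega, ?_, ?_⟩
    · rw [Nat.add_zero, hD, e1]; norm_num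
    · rw [Nat.add_zero, hT, e2]; norm_num
  | succ m ih =>
    intro r D T hD hT h
    rw [wl_succ, Bool.and_eq_true] at h
    obtain ⟨r1, r2, r3⟩ := ih (r + 1) _ _ (by rw [Dw_succ, hD]; push_cast; rfl)
      (by rw [Tw_succ, hT]; push_cast; rfl) h.2
    rw [show r + (m + 1) = r + 1 + m by omega]
    refine ⟨?_, r2, r3⟩
    intro i hi
    rcases Nat.eq_zero_or_pos i with q | q
    · subst q; exact wchk_spec hD hT h.1
    · have := r1 (i - 1) (by omega)
      rwa [show r + 1 + (i - 1) = r + i by omega] at this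

set_option maxRecDepth 100000 in
lemma wl_ok : wl 2310 0 0 0 = true := by decide +kernel

lemma wbase : (∀ i < 2310, WB i) ∧ Dw 2310 = 3317760 ∧ Tw 2310 = 3832567200 := by
  have := wl_sound 2310 0 0 0 rfl rfl wl_ok
  simpa using this

lemma wf_add (a : ℕ) : wf (a + 2310) = wf a := by
  rw [← wf_mod (a + 2310), Nat.add_mod_right, wf_mod]

lemma Dw_add (A : ℕ) : Dw (A + 2310) = Dw A + 3317760 := by
  induction A with
  | zero => rw [Nat.zero_add, wbase.2.1]; rfl
  | succ A ih =>
    rw [show A + 1 + 2310 = (A + 2310) + 1 by omega, Dw_succ, ih, Dw_succ,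
      show A + 2310 + 1 = (A + 1) + 2310 by omega, wf_add]
    ring

lemma Tw_add (A : ℕ) : Tw (A + 2310) = Tw A + 3832567200 + 2310 * Dw A := by
  induction A with
  | zero => rw [Nat.zero_add, wbase.2.2]; rfl
  | succ A ih =>
    rw [show A + 1 + 2310 = (A + 2310) + 1 by omega, Tw_succ, ih, Tw_succ,
      show A + 2310 + 1 = (A + 1) + 2310 by omega, wf_add, Dw_succ]
    push_cast
    ring

lemma WB_all (A : ℕ) : WB A := by
  induction A using Nat.strong_induction_on with
  | _ A ih =>
    rcases Nat.lt_or_ge A 2310 with q | q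
    · exact wbase.1 A q
    · obtain ⟨B, rfl⟩ := Nat.exists_eq_add_of_le' q
      obtain ⟨⟨a, b⟩, c, d⟩ := ih B (by omega)
      unfold WB
      rw [Dw_add, Tw_add]
      push_cast
      refine ⟨⟨?_, ?_⟩, ?_, ?_⟩ <;> linarith

/-! ### Blocks of levels -/

lemma Ebar_all_ok : allB (fun r => Nat.ble (EbarT (Nat.gcd r 2310)) 11640) 2310 = true := by
  decide +kernel

lemma Ebar_gcd (a : ℕ) : Ebar (Nat.gcd a 2310) ≤ 11640 := by
  have h := allB_spec _ _ Ebar_all_ok (a % 2310) (Nat.mod_lt _ (by norm_num))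
  rw [Nat.ble_eq, EbarT_eq, ← Nat.gcd_rec, Nat.gcd_comm] at h
  exact h

lemma cnt_wf {k h : ℕ} {U W : ℕ → ℤ} (hc : Chain k h U W) (a : ℕ) (ha : 1 ≤ a) (hah : a ≤ h) :
    2310 * (cnt a (U a) (W a) : ℤ) ≤ wf a * xv h U W a + 11640 := by
  have h0 := hc.low a ha hah
  set g := Nat.gcd a 2310 with hg
  have hpos : 1 ≤ g := Nat.gcd_pos_of_pos_right _ (by norm_num)
  have hle : g ≤ 2310 := Nat.gcd_le_right _ (by norm_num)
  have e1 := cnt_lin g hpos (by omega) (U a) (W a) h0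
  have e2 : (cnt a (U a) (W a) : ℤ) ≤ cnt g (U a) (W a) := by
    exact_mod_cast cnt_mono (Nat.gcd_dvd_left a 2310) _ _
  have e3 : (2310 : ℤ) * phi g = wf a * g := by exact_mod_cast wf_spec a
  have e4 : (Ebar g : ℤ) ≤ 11640 := by exact_mod_cast Ebar_gcd a
  have e5 : U a + W a ≤ xv h U W a := by
    unfold xv; rw [if_pos hah]; exact le_max_left _ _
  have hgz : (0 : ℤ) < g := by exact_mod_cast hpos
  have e6 : (wf a : ℤ) * (U a + W a) ≤ wf a * xv h U W a := by gcongr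
  have e7 : (g : ℤ) * (2310 * cnt a (U a) (W a)) ≤ g * (wf a * xv h U W a + 11640) := by
    calc (g : ℤ) * (2310 * cnt a (U a) (W a)) ≤ g * (2310 * cnt g (U a) (W a)) := by gcongr
      _ = 2310 * (g * cnt g (U a) (W a)) := by ring
      _ ≤ 2310 * (phi g * (U a + W a)) + g * Ebar g := e1
      _ = g * (wf a * (U a + W a) + Ebar g) := by rw [← mul_assoc, e3]; ring
      _ ≤ _ := by gcongr
  exact le_of_mul_le_mul_left e7 hgz

/-- The weighted length of a block. -/
def Xw (h : ℕ) (U W : ℕ → ℤ) (p q : ℕ) : ℤ := ∑ a ∈ Finset.Ioc p q, (wf a : ℤ) * xv h U W a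

lemma Xw_nonneg (h : ℕ) (U W : ℕ → ℤ) (p q : ℕ) : 0 ≤ Xw h U W p q :=
  Finset.sum_nonneg fun a _ => mul_nonneg (by positivity) (xv_nonneg h U W a)

lemma Dw_sub {p q : ℕ} (hpq : p ≤ q) : ∑ a ∈ Finset.Ioc p q, (wf a : ℤ) = Dw q - Dw p := by
  unfold Dw
  rw [← Finset.sum_Ioc_consecutive _ (Nat.zero_le p) hpq]; ring

lemma Tw_sub {p q : ℕ} (hpq : p ≤ q) : ∑ a ∈ Finset.Ioc p q, (a : ℤ) * wf a = Tw q - Tw p := by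
  unfold Tw
  rw [← Finset.sum_Ioc_consecutive _ (Nat.zero_le p) hpq]; ring

lemma block_pair {k h : ℕ} {U W : ℕ → ℤ} (hc : Chain k h U W) {p q p' q' : ℕ} (hpq : p ≤ q)
    (hpq' : p' ≤ q') (hq : q ≤ h) (hq' : q' ≤ h) :
    Xw h U W p q * (Tw q' - Tw p') + (Tw q - Tw p) * Xw h U W p' q' ≤
      2 * k * ((Dw q - Dw p) * (Dw q' - Dw p')) := by
  rw [← Dw_sub hpq, ← Dw_sub hpq', ← Tw_sub hpq, ← Tw_sub hpq']
  unfold Xw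
  rw [Finset.sum_mul_sum, Finset.sum_mul_sum, Finset.sum_mul_sum, ← Finset.sum_add_distrib,
    Finset.mul_sum]
  apply Finset.sum_le_sum
  intro a ha
  rw [← Finset.sum_add_distrib, Finset.mul_sum]
  apply Finset.sum_le_sum
  intro b hb
  rw [Finset.mem_Ioc] at ha hb
  have := xv_pair hc a b (by omega) (by omega) (by omega) (by omega)
  calc (wf a : ℤ) * xv h U W a * (b * wf b) + a * wf a * (wf b * xv h U W b)
      = (wf a * wf b) * (b * xv h U W a + a * xv h U W b) := by ring
    _ ≤ (wf a * wf b) * (2 * k) := by gcongr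
    _ = _ := by ring

/-- Two blocks whose moments are at least `t h²` and whose weights are bounded. -/
lemma block_bound {k h : ℕ} {U W : ℕ → ℤ} (hc : Chain k h U W) {p q p' q' : ℕ} (hpq : p ≤ q)
    (hpq' : p' ≤ q') (hq : q ≤ h) (hq' : q' ≤ h) (t c c' : ℚ) (ht : 0 < t) (hcc : 0 ≤ c)
    (h1 : t * h ^ 2 ≤ ((Tw q - Tw p : ℤ) : ℚ)) (h2 : t * h ^ 2 ≤ ((Tw q' - Tw p' : ℤ) : ℚ))
    (h3 : ((Dw q - Dw p : ℤ) : ℚ) ≤ c * h) (h4 : ((Dw q' - Dw p' : ℤ) : ℚ) ≤ c' * h) :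
    (Xw h U W p q : ℚ) + Xw h U W p' q' ≤ 2 * k * (c * c' / t) := by
  have hb := block_pair hc hpq hpq' hq hq'
  have hb' : (Xw h U W p q : ℚ) * ((Tw q' - Tw p' : ℤ) : ℚ) + ((Tw q - Tw p : ℤ) : ℚ) * Xw h U W p' q' ≤
      2 * k * (((Dw q - Dw p : ℤ) : ℚ) * ((Dw q' - Dw p' : ℤ) : ℚ)) := by exact_mod_cast hb
  have n1 : (0 : ℚ) ≤ Xw h U W p q := by exact_mod_cast Xw_nonneg h U W p q
  have n2 : (0 : ℚ) ≤ Xw h U W p' q' := by exact_mod_cast Xw_nonneg h U W p' q'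
  have n4 : (0 : ℚ) ≤ ((Dw q' - Dw p' : ℤ) : ℚ) := by
    rw [← Dw_sub hpq']; exact_mod_cast Finset.sum_nonneg fun a _ => by positivity
  have hh : (0 : ℚ) < h := by exact_mod_cast hc.pos
  have e1 : (t * h ^ 2) * ((Xw h U W p q : ℚ) + Xw h U W p' q') ≤ 2 * k * ((c * h) * (c' * h)) := by
    calc (t * h ^ 2) * ((Xw h U W p q : ℚ) + Xw h U W p' q')
        = Xw h U W p q * (t * h ^ 2) + (t * h ^ 2) * Xw h U W p' q' := by ring
      _ ≤ (Xw h U W p q : ℚ) * ((Tw q' - Tw p' : ℤ) : ℚ) + ((Tw q - Tw p : ℤ) : ℚ) * Xw h U W p' q' := by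
          gcongr
      _ ≤ _ := hb'
      _ ≤ _ := by gcongr
  have e2 : 2 * k * ((c * h) * (c' * h)) = (t * h ^ 2) * (2 * k * (c * c' / t)) := by
    field_simp
  rw [e2] at e1
  exact le_of_mul_le_mul_left e1 (by positivity)


/-- Weight of a block between `x h` and `y h`. -/
lemma D_block {p q : ℕ} : 2310 * ((Dw q - Dw p : ℤ) : ℚ) ≤ 3317760 * ((q : ℚ) - p) + 3069480 := by
  obtain ⟨⟨a, b⟩, -⟩ := WB_all p
  obtain ⟨⟨c, d⟩, -⟩ := WB_all q
  have : 2310 * (Dw q - Dw p) ≤ 3317760 * ((q : ℤ) - p) + 3069480 := by linarith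
  exact_mod_cast this

lemma T_block {p q : ℕ} : 3317760 * ((q : ℚ) ^ 2 - (p : ℚ) ^ 2) + 248275 * q - 7354440 * p ≤
    4620 * ((Tw q - Tw p : ℤ) : ℚ) := by
  obtain ⟨-, a, b⟩ := WB_all p
  obtain ⟨-, c, d⟩ := WB_all q
  have : 3317760 * ((q : ℤ) ^ 2 - (p : ℤ) ^ 2) + 248275 * q - 7354440 * p ≤ 4620 * (Tw q - Tw p) := by
    linarith
  exact_mod_cast this

lemma sq_bounds {q h : ℕ} (x : ℚ) (hx : 0 ≤ x) (h1 : (q : ℚ) ≤ x * h) (h2 : x * h - 1 ≤ q) :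
    (q : ℚ) ^ 2 ≤ x ^ 2 * (h : ℚ) ^ 2 ∧ x ^ 2 * (h : ℚ) ^ 2 - 2 * x * h ≤ (q : ℚ) ^ 2 := by
  have hq : (0 : ℚ) ≤ q := by positivity
  constructor
  · rw [← mul_pow]; gcongr
  · have h0 : (0 : ℚ) ≤ x * h := by positivity
    nlinarith

lemma good_large (h : ℕ) (hh : 4429 ≤ h) (k : ℕ) (U W : ℕ → ℤ) (hc : Chain k h U W)
    (hk2 : 3 * h ^ 2 ≤ 4 * k) : 1 + ∑ a ∈ Finset.Icc 1 h, cnt a (U a) (W a) ≤ k + 2 := by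
  have hhq : (4429 : ℚ) ≤ h := by exact_mod_cast hh
  have hk2q : 3 * (h : ℚ) ^ 2 ≤ 4 * k := by exact_mod_cast hk2
  obtain ⟨q1, e1⟩ : ∃ q, q = h * 383 / 1000 := ⟨_, rfl⟩
  obtain ⟨q2, e2⟩ : ∃ q, q = h * 707 / 1000 := ⟨_, rfl⟩
  obtain ⟨q3, e3⟩ : ∃ q, q = h * 924 / 1000 := ⟨_, rfl⟩
  have b1 : (q1 : ℚ) ≤ 383 / 1000 * h := by
    have : q1 * 1000 ≤ h * 383 := by omega
    have : (q1 : ℚ) * 1000 ≤ h * 383 := by exact_mod_cast this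
    linarith
  have b1' : 383 / 1000 * (h : ℚ) - 1 ≤ q1 := by
    have : h * 383 ≤ q1 * 1000 + 1000 := by omega
    have : (h : ℚ) * 383 ≤ q1 * 1000 + 1000 := by exact_mod_cast this
    linarith
  have b2 : (q2 : ℚ) ≤ 707 / 1000 * h := by
    have : q2 * 1000 ≤ h * 707 := by omega
    have : (q2 : ℚ) * 1000 ≤ h * 707 := by exact_mod_cast this
    linarith
  have b2' : 707 / 1000 * (h : ℚ) - 1 ≤ q2 := by
    have : h * 707 ≤ q2 * 1000 + 1000 := by omega
    have : (h : ℚ) * 707 ≤ q2 * 1000 + 1000 := by exact_mod_cast this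
    linarith
  have b3 : (q3 : ℚ) ≤ 924 / 1000 * h := by
    have : q3 * 1000 ≤ h * 924 := by omega
    have : (q3 : ℚ) * 1000 ≤ h * 924 := by exact_mod_cast this
    linarith
  have b3' : 924 / 1000 * (h : ℚ) - 1 ≤ q3 := by
    have : h * 924 ≤ q3 * 1000 + 1000 := by omega
    have : (h : ℚ) * 924 ≤ q3 * 1000 + 1000 := by exact_mod_cast this
    linarith
  have l1 : 0 ≤ q1 := Nat.zero_le _
  have l2 : q1 ≤ q2 := by omega
  have l3 : q2 ≤ q3 := by omega
  have l4 : q3 ≤ h := by omega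
  obtain ⟨s1, s1'⟩ := sq_bounds (383 / 1000) (by norm_num) b1 b1'
  obtain ⟨s2, s2'⟩ := sq_bounds (707 / 1000) (by norm_num) b2 b2'
  obtain ⟨s3, s3'⟩ := sq_bounds (924 / 1000) (by norm_num) b3 b3'
  have hsq : 4429 * (h : ℚ) ≤ (h : ℚ) ^ 2 := by nlinarith
  have D1 := @D_block 0 q1
  have D2 := @D_block q1 q2
  have D3 := @D_block q2 q3
  have D4 := @D_block q3 h
  have T1 := @T_block 0 q1
  have T2 := @T_block q1 q2
  have T3 := @T_block q2 q3
  have T4 := @T_block q3 h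
  simp only [Nat.cast_zero] at D1 T1
  have B14 := block_bound (p := 0) (q := q1) (p' := q3) (q' := h) hc l1 l4 (by omega) le_rfl
    (10468 / 100) (5504 / 10) (1098 / 10) (by norm_num) (by norm_num)
    (by linarith) (by linarith) (by linarith) (by linarith)
  have B23 := block_bound (p := q1) (q := q2) (p' := q2) (q' := q3) hc l2 l3 (by omega) (by omega)
    (25325 / 100) (466) (3123 / 10) (by norm_num) (by norm_num)
    (by linarith) (by linarith) (by linarith) (by linarith)
  have hX : Xw h U W 0 q1 + Xw h U W q1 q2 + Xw h U W q2 q3 + Xw h U W q3 h = Xw h U W 0 h := by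
    unfold Xw
    rw [Finset.sum_Ioc_consecutive _ l1 l2, Finset.sum_Ioc_consecutive _ (by omega) l3,
      Finset.sum_Ioc_consecutive _ (by omega) l4]
  have hX' : (Xw h U W 0 q1 : ℚ) + Xw h U W q1 q2 + Xw h U W q2 q3 + Xw h U W q3 h = Xw h U W 0 h := by
    exact_mod_cast hX
  have hS : 2310 * (∑ a ∈ Finset.Icc 1 h, (cnt a (U a) (W a) : ℤ)) ≤ Xw h U W 0 h + 11640 * h := by
    have e : Finset.Icc 1 h = Finset.Ioc 0 h := by ext; simp; omega
    rw [e, Finset.mul_sum]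
    calc _ ≤ ∑ a ∈ Finset.Ioc 0 h, ((wf a : ℤ) * xv h U W a + 11640) := by
          apply Finset.sum_le_sum
          intro a ha
          rw [Finset.mem_Ioc] at ha
          exact cnt_wf hc a (by omega) ha.2
      _ = _ := by
          rw [Finset.sum_add_distrib]
          unfold Xw
          simp
          ring
  have hS' : 2310 * ((∑ a ∈ Finset.Icc 1 h, cnt a (U a) (W a) : ℕ) : ℚ) ≤ Xw h U W 0 h + 11640 * h := by
    exact_mod_cast hS
  have fin : ((∑ a ∈ Finset.Icc 1 h, cnt a (U a) (W a) : ℕ) : ℚ) ≤ k := by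
    norm_num at B14 B23
    linarith
  have fin' : ∑ a ∈ Finset.Icc 1 h, cnt a (U a) (W a) ≤ k := by exact_mod_cast fin
  omega


/-! ### Constructions -/

/-- The candidate sets of height at most three. -/
noncomputable def QF (a b c : ℕ) : Finset (ℤ × ℤ) :=
  {((1 : ℤ), (0 : ℤ))} ∪ ((Finset.Icc (-(a : ℤ)) a).image fun i => (i, (1 : ℤ))) ∪
    ((Finset.Ico (-(b : ℤ)) b).image fun i => (2 * i + 1, (2 : ℤ))) ∪
    ((Finset.Ico (-(c : ℤ)) c).image fun i => (3 * i + 1, (3 : ℤ))) ∪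
    ((Finset.Ico (-(c : ℤ)) c).image fun i => (3 * i + 2, (3 : ℤ)))

lemma mem_QF {a b c : ℕ} {p : ℤ × ℤ} : p ∈ QF a b c ↔
    (p.1 = 1 ∧ p.2 = 0) ∨ ((-(a : ℤ) ≤ p.1 ∧ p.1 ≤ a) ∧ p.2 = 1) ∨
    ((∃ i : ℤ, -(b : ℤ) ≤ i ∧ i < b ∧ p.1 = 2 * i + 1) ∧ p.2 = 2) ∨
    ((∃ i : ℤ, -(c : ℤ) ≤ i ∧ i < c ∧ (p.1 = 3 * i + 1 ∨ p.1 = 3 * i + 2)) ∧ p.2 = 3) := by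
  obtain ⟨x, y⟩ := p
  unfold QF
  simp only [Finset.mem_union, Finset.mem_singleton, Finset.mem_image, Finset.mem_Icc,
    Finset.mem_Ico, Prod.mk.injEq]
  constructor
  · rintro ((((⟨h1, h2⟩ | ⟨i, hi, h1, h2⟩) | ⟨i, hi, h1, h2⟩) | ⟨i, hi, h1, h2⟩) | ⟨i, hi, h1, h2⟩)
    · exact Or.inl ⟨h1, h2⟩
    · exact Or.inr (Or.inl ⟨by omega, h2.symm⟩)
    · exact Or.inr (Or.inr (Or.inl ⟨⟨i, hi.1, hi.2, h1.symm⟩, h2.symm⟩))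
    · exact Or.inr (Or.inr (Or.inr ⟨⟨i, hi.1, hi.2, Or.inl h1.symm⟩, h2.symm⟩))
    · exact Or.inr (Or.inr (Or.inr ⟨⟨i, hi.1, hi.2, Or.inr h1.symm⟩, h2.symm⟩))
  · rintro (⟨h1, h2⟩ | ⟨h1, h2⟩ | ⟨⟨i, h1, h2, h3⟩, h4⟩ | ⟨⟨i, h1, h2, h3 | h3⟩, h4⟩)
    · exact Or.inl (Or.inl (Or.inl (Or.inl ⟨h1, h2⟩)))
    · exact Or.inl (Or.inl (Or.inl (Or.inr ⟨x, h1, rfl, h2.symm⟩)))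
    · exact Or.inl (Or.inl (Or.inr ⟨i, ⟨h1, h2⟩, h3.symm, h4.symm⟩))
    · exact Or.inl (Or.inr ⟨i, ⟨h1, h2⟩, h3.symm, h4.symm⟩)
    · exact Or.inr ⟨i, ⟨h1, h2⟩, h3.symm, h4.symm⟩

lemma card_QF (a b c : ℕ) : (QF a b c).card = 2 * a + 2 * b + 4 * c + 2 := by
  unfold QF
  rw [Finset.card_union_of_disjoint, Finset.card_union_of_disjoint, Finset.card_union_of_disjoint,
    Finset.card_union_of_disjoint, Finset.card_image_of_injective, Finset.card_image_of_injective,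
    Finset.card_image_of_injective, Finset.card_image_of_injective]
  · simp only [Int.card_Icc, Int.card_Ico, Finset.card_singleton]
    omega
  all_goals first
    | (intro i j hij; simp only [Prod.mk.injEq] at hij; omega)
    | (rw [Finset.disjoint_left]
       rintro ⟨x, y⟩ h1 h2
       simp only [Finset.mem_union, Finset.mem_singleton, Finset.mem_image, Finset.mem_Icc,
         Finset.mem_Ico, Prod.mk.injEq] at h1 h2
       obtain ⟨j, hj, h3, h4⟩ := h2
       first
       | (rcases h1 with (((⟨h1, h2⟩ | ⟨i, hi, h1, h2⟩) | ⟨i, hi, h1, h2⟩) | ⟨i, hi, h1, h2⟩) <;> omega)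
       | (rcases h1 with ((⟨h1, h2⟩ | ⟨i, hi, h1, h2⟩) | ⟨i, hi, h1, h2⟩) <;> omega)
       | (rcases h1 with (⟨h1, h2⟩ | ⟨i, hi, h1, h2⟩) <;> omega)
       | omega)

lemma nice_QF {k a b c : ℕ} (h3 : 3 ≤ k) (h11 : 2 * a ≤ k) (h12 : b = 0 ∨ 2 * a + 2 * b ≤ k + 1)
    (h22 : b = 0 ∨ 8 * b ≤ k + 4) (h13 : c = 0 ∨ 3 * a + 3 * c ≤ k + 1)
    (h23 : b = 0 ∨ c = 0 ∨ 6 * b + 6 * c ≤ k + 5) (h33 : c = 0 ∨ 18 * c ≤ k + 6) :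
    IsKNice k (QF a b c : Set (ℤ × ℤ)) := by
  refine ⟨?_, ?_, ?_⟩
  · intro p hp
    rw [Finset.mem_coe, mem_QF] at hp
    obtain ⟨x, y⟩ := p
    simp only at hp ⊢
    constructor
    · intro he
      rw [Prod.mk.injEq] at he
      omega
    · rw [← Int.isCoprime_iff_gcd_eq_one]
      rcases hp with ⟨h1, h2⟩ | ⟨h1, h2⟩ | ⟨⟨i, h1, h2, h3⟩, h4⟩ | ⟨⟨i, h1, h2, h3 | h3⟩, h4⟩
      · subst h1 h2; exact isCoprime_one_left
      · subst h2; exact isCoprime_one_right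
      · subst h3 h4; exact ⟨1, -i, by ring⟩
      · subst h3 h4; exact ⟨1, -i, by ring⟩
      · subst h3 h4; exact ⟨-1, i + 1, by ring⟩
  · intro p hp hq
    rw [Finset.mem_coe, mem_QF] at hp hq
    obtain ⟨x, y⟩ := p
    simp only [Prod.neg_mk] at hp hq
    have hy : (x = 1 ∧ y = 0) ∨ 0 < y := by
      rcases hp with h | h | ⟨-, h⟩ | ⟨-, h⟩ <;> omega
    have hy' : (-x = 1 ∧ -y = 0) ∨ 0 < -y := by
      rcases hq with h | h | ⟨-, h⟩ | ⟨-, h⟩ <;> omega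
    omega
  · intro p hp q hq
    rw [Finset.mem_coe, mem_QF] at hp hq
    obtain ⟨x, y⟩ := p
    obtain ⟨x', y'⟩ := q
    simp only at hp hq ⊢
    rw [abs_le]
    rcases hp with ⟨h1, h2⟩ | ⟨h1, h2⟩ | ⟨⟨i, h1, h0, h4⟩, h2⟩ | ⟨⟨i, h1, h0, h4⟩, h2⟩ <;>
      rcases hq with ⟨g1, g2⟩ | ⟨g1, g2⟩ | ⟨⟨j, g1, g0, g4⟩, g2⟩ | ⟨⟨j, g1, g0, g4⟩, g2⟩ <;>
      subst h2 g2 <;> constructor <;> omega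

lemma exists_nice (k : ℕ) (hk : 385 ≤ k) : ∃ Q : Set (ℤ × ℤ), IsKNice k Q ∧ Q.Finite ∧
    Q.ncard = targetSize k := by
  have key : ∃ a b c : ℕ, IsKNice k (QF a b c : Set (ℤ × ℤ)) ∧
      2 * a + 2 * b + 4 * c + 2 = targetSize k := by
    unfold targetSize
    by_cases h2 : k % 6 = 2
    · refine ⟨2 * (k / 6) - k / 24, k / 6 - k / 24, k / 24 + 1, nice_QF ?_ ?_ ?_ ?_ ?_ ?_ ?_, ?_⟩
      all_goals first
        | (rw [if_pos h2]; omega)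
        | omega
    · by_cases ho : k % 6 = 1 ∨ k % 6 = 3 ∨ k % 6 = 5
      · refine ⟨k / 2, 1, 0, nice_QF ?_ ?_ ?_ ?_ ?_ ?_ ?_, ?_⟩
        all_goals first
          | (rw [if_neg h2, if_pos ho]; omega)
          | omega
      · refine ⟨k / 2, 0, 0, nice_QF ?_ ?_ ?_ ?_ ?_ ?_ ?_, ?_⟩
        all_goals first
          | (rw [if_neg h2, if_neg ho]; omega)
          | omega
  obtain ⟨a, b, c, h1, h2⟩ := key
  refine ⟨_, h1, Finset.finite_toSet _, ?_⟩
  rw [Set.ncard_coe_finset, card_QF, h2]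

theorem max_size_of_kNice_large (k : ℕ) (hk : 385 ≤ k) :
    (∀ Q : Set (ℤ × ℤ), IsKNice k Q → Q.Finite ∧ Q.ncard ≤ targetSize k) ∧
    (∃ Q : Set (ℤ × ℤ), IsKNice k Q ∧ Q.Finite ∧ Q.ncard = targetSize k) := by
  refine ⟨?_, exists_nice k hk⟩
  intro Q hQ
  refine ⟨hQ.finite, ?_⟩
  have ht : k + 2 ≤ targetSize k := by
    unfold targetSize
    split_ifs <;> omega
  rcases exists_chain hQ with h1 | ⟨h, U, W, hc, hk2, hn⟩
  · omega
  · refine hn.trans ?_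
    rcases Nat.lt_or_ge 3 h with q | q
    · refine le_trans ?_ ht
      rcases Nat.lt_or_ge h 4429 with q2 | q2
      · by_cases htop : h ≤ 51 ∧ k ≤ (rt h).2
        · exact dp_range hc q htop.1 hk hk2 htop.2
        · refine good_range h q q2 k U W hc hk hk2 ?_
          intro h51
          by_contra hcon
          exact htop ⟨h51, by omega⟩
      · exact good_large h q2 k U W hc hk2
    · exact small_heights hc q
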